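/- arXiv:2403.05505 — 9 statements merged into one kernel-verified Lean document; each statement's English description precedes it below -/
import Mathlib

section
/- Let (M,d) be a metric space and S = {1,…,N} a finite set. For every x ∈ M let Q(x) = (q_{ij}(x)) be a conservative irreducible rate matrix on S with sup_{x ∈ M, i ∈ S} (−q_{ii}(x)) < ∞, and assume that for every compact set K ⊆ M there is a constant C_K > 0 such that |q_{ij}(x) − q_{ij}(y)| ≤ C_K d(x,y) for all x, y ∈ K and all i, j ∈ S. Define I(x,π) = − inf_{g : S → (0,∞)} Σ_{z ∈ S} π_z (Q(x)g)(z)/g(z). Then for every compact set K ⊆ M the family of functions {x ↦ I(x,π) : π ∈ 𝒫(S)} is uniformly equicontinuous on K: for every ε > 0 there exists δ > 0 such that for all π ∈ 𝒫(S) and all x, y ∈ K with d(x,y) < δ one has |I(x,π) − I(y,π)| ≤ ε. -/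
/-!
With `r z j = π z * q x z j` for `z ≠ j`, the functional is
`I(x, π) = J r := sup_{g > 0} ∑_{z, j} r z j * (1 - g j / g z)`,
a function of the matrix of jump fluxes `r` alone. The point is that `J` is continuous on the
nonnegative matrices, including the boundary, where optimal `g` may fail to exist:

* `J` is lower semicontinuous, being a supremum of linear functions;
* if `t • r₀ ≤ r` entrywise with `0 ≤ t ≤ 1`, then each factor `1 - g j / g z` is at most `1`, so
  `J r ≤ ∑ (r - t • r₀) + t * J r₀ ≤ ∑ (r - t • r₀) + J r₀`. For `t < 1` the condition
  `t • r₀ ≤ r` holds for all nonnegative `r` near `r₀` (vanishing entries of `r₀` impose nothing),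
  and letting `t → 1` gives upper semicontinuity.

Hence `J` is uniformly continuous on the compact box `[0, C]^{N × N}`, which contains every flux
matrix because `q` is bounded. The flux matrix is Lipschitz in `x ∈ K` uniformly in `π`, which
gives the claim.
-/

open Filter Topology

namespace DonskerVaradhan

/-- The linear functional `∑_{z, j} r z j * (1 - g j / g z)` of the flux matrix `r`. The diagonal
of `r` does not contribute when `g > 0`. -/
noncomputable def fluxSum {N : ℕ} (g : Fin N → ℝ) (r : Fin N → Fin N → ℝ) : ℝ :=
  ∑ z, ∑ j, r z j * (1 - g j / g z)

/-- The Donsker–Varadhan functional in terms of the flux matrix: the supremum of `fluxSum g r`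
over strictly positive `g`. It is a genuine supremum for `r ≥ 0`. -/
noncomputable def fluxRate {N : ℕ} (r : Fin N → Fin N → ℝ) : ℝ :=
  ⨆ g : {g : Fin N → ℝ // ∀ i, 0 < g i}, fluxSum g.1 r

variable {N : ℕ}

instance : Nonempty {g : Fin N → ℝ // ∀ i, 0 < g i} := ⟨⟨fun _ => 1, fun _ => one_pos⟩⟩

lemma fluxSum_le {g : Fin N → ℝ} (hg : ∀ i, 0 < g i) {r : Fin N → Fin N → ℝ}
    (hr : ∀ z j, 0 ≤ r z j) : fluxSum g r ≤ ∑ z, ∑ j, r z j := by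
  refine Finset.sum_le_sum fun z _ => Finset.sum_le_sum fun j _ => ?_
  have h : 0 ≤ g j / g z := (div_pos (hg j) (hg z)).le
  exact mul_le_of_le_one_right (hr z j) (by linarith)

lemma bddAbove_fluxSum {r : Fin N → Fin N → ℝ} (hr : ∀ z j, 0 ≤ r z j) :
    BddAbove (Set.range fun g : {g : Fin N → ℝ // ∀ i, 0 < g i} => fluxSum g.1 r) :=
  ⟨_, by rintro _ ⟨g, rfl⟩; exact fluxSum_le g.2 hr⟩

lemma fluxSum_le_fluxRate {g : Fin N → ℝ} (hg : ∀ i, 0 < g i) {r : Fin N → Fin N → ℝ}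
    (hr : ∀ z j, 0 ≤ r z j) : fluxSum g r ≤ fluxRate r :=
  le_ciSup (bddAbove_fluxSum hr) (⟨g, hg⟩ : {g : Fin N → ℝ // ∀ i, 0 < g i})

lemma fluxRate_nonneg {r : Fin N → Fin N → ℝ} (hr : ∀ z j, 0 ≤ r z j) : 0 ≤ fluxRate r := by
  have h := fluxSum_le_fluxRate (g := fun _ => 1) (fun _ => one_pos) hr
  simpa [fluxSum] using h

/-- One-sided comparison of the rates of two flux matrices, the key to upper semicontinuity. -/
lemma fluxRate_le {r r₀ : Fin N → Fin N → ℝ} (hr₀ : ∀ z j, 0 ≤ r₀ z j) {η : ℝ}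
    (h0 : 0 ≤ η) (h1 : η ≤ 1) (h : ∀ z j, (1 - η) * r₀ z j ≤ r z j) :
    fluxRate r ≤ (∑ z, ∑ j, (r z j - r₀ z j)) + η * (∑ z, ∑ j, r₀ z j) + fluxRate r₀ := by
  refine ciSup_le fun g => ?_
  have hsplit : fluxSum g.1 r
      = fluxSum g.1 (fun z j => r z j - (1 - η) * r₀ z j) + (1 - η) * fluxSum g.1 r₀ := by
    simp only [fluxSum, Finset.mul_sum, ← Finset.sum_add_distrib]
    exact Finset.sum_congr rfl fun z _ => Finset.sum_congr rfl fun j _ => by ring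
  have hA := fluxSum_le g.2 (r := fun z j => r z j - (1 - η) * r₀ z j)
    (fun z j => sub_nonneg.2 (h z j))
  have hsum : ∑ z, ∑ j, (r z j - (1 - η) * r₀ z j)
      = (∑ z, ∑ j, (r z j - r₀ z j)) + η * (∑ z, ∑ j, r₀ z j) := by
    simp only [Finset.mul_sum, ← Finset.sum_add_distrib]
    exact Finset.sum_congr rfl fun z _ => Finset.sum_congr rfl fun j _ => by ring
  have hB := mul_le_mul_of_nonneg_left (fluxSum_le_fluxRate g.2 hr₀) (sub_nonneg.2 h1)
  have hC := mul_nonneg h0 (fluxRate_nonneg hr₀)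
  linarith

lemma continuousOn_fluxRate (C : ℝ) :
    ContinuousOn (fluxRate (N := N)) (Set.Icc 0 (fun _ _ => C)) := by
  intro r₀ hr₀
  have hr₀' : ∀ z j, 0 ≤ r₀ z j := fun z j => hr₀.1 z j
  have hmem : ∀ᶠ r in 𝓝[Set.Icc 0 (fun _ _ => C)] r₀, ∀ z j, (0 : ℝ) ≤ r z j := by
    filter_upwards [self_mem_nhdsWithin] with r hr z j using hr.1 z j
  refine tendsto_order.2 ⟨fun a ha => ?_, fun a ha => ?_⟩
  · obtain ⟨g, hg⟩ := exists_lt_of_lt_ciSup ha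
    have hc : Continuous (fluxSum g.1) := by unfold fluxSum; fun_prop
    filter_upwards [hmem, (hc.tendsto r₀).mono_left nhdsWithin_le_nhds |>.eventually_const_lt hg]
      with r hr h using h.trans_le (fluxSum_le_fluxRate g.2 hr)
  · set T := ∑ z, ∑ j, r₀ z j with hT
    have hT0 : 0 ≤ T := Finset.sum_nonneg fun z _ => Finset.sum_nonneg fun j _ => hr₀' z j
    obtain ⟨η, hη0, hη1, hηT⟩ : ∃ η : ℝ, 0 < η ∧ η ≤ 1 ∧ η * T < (a - fluxRate r₀) / 2 := by
      have ht : Tendsto (fun η : ℝ => η * T) (𝓝[>] 0) (𝓝 0) := by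
        have : Continuous fun η : ℝ => η * T := by fun_prop
        simpa using (this.tendsto 0).mono_left nhdsWithin_le_nhds
      have h1 := ht.eventually_lt_const (show (0 : ℝ) < (a - fluxRate r₀) / 2 by linarith)
      have h2 : ∀ᶠ η : ℝ in 𝓝[>] 0, 0 < η ∧ η ≤ 1 := by
        filter_upwards [Ioc_mem_nhdsGT (zero_lt_one' ℝ)] with η h using h
      obtain ⟨η, h, h'⟩ := (h1.and h2).exists
      exact ⟨η, h'.1, h'.2, h⟩
    have hlow : ∀ᶠ r in 𝓝[Set.Icc 0 (fun _ _ => C)] r₀,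
        ∀ z j, (1 - η) * r₀ z j ≤ r z j := by
      refine eventually_all.2 fun z => eventually_all.2 fun j => ?_
      rcases (hr₀' z j).eq_or_lt with h | h
      · filter_upwards [hmem] with r hr
        simpa [← h] using hr z j
      · have hc : Continuous fun r : Fin N → Fin N → ℝ => r z j := by fun_prop
        have hlt : (1 - η) * r₀ z j < r₀ z j := by nlinarith
        filter_upwards [(hc.tendsto r₀).mono_left nhdsWithin_le_nhds |>.eventually_const_lt hlt]
          with r hr using hr.le
    have hsum : ∀ᶠ r in 𝓝[Set.Icc 0 (fun _ _ => C)] r₀,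
        ∑ z, ∑ j, (r z j - r₀ z j) < (a - fluxRate r₀) / 2 := by
      have hc : Continuous fun r : Fin N → Fin N → ℝ => ∑ z, ∑ j, (r z j - r₀ z j) := by fun_prop
      refine (hc.tendsto r₀).mono_left nhdsWithin_le_nhds |>.eventually_lt_const ?_
      simp only [sub_self, Finset.sum_const_zero]
      linarith
    filter_upwards [hlow, hsum] with r h1 h2
    have := fluxRate_le hr₀' hη0.le hη1 h1
    linarith

/-- The variational formula for `I` in terms of fluxes. The absolute value leaves off-diagonal
fluxes unchanged and only serves to make the irrelevant diagonal nonnegative. -/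
lemma neg_sInf_eq_fluxRate {q : Fin N → Fin N → ℝ} (hoff : ∀ i j, i ≠ j → 0 ≤ q i j)
    {π : Fin N → ℝ} (hπ : ∀ i, 0 ≤ π i) :
    - sInf {s : ℝ | ∃ g : Fin N → ℝ, (∀ i, 0 < g i) ∧
      s = ∑ z, π z * (∑ j, q z j * (g j - g z)) / g z}
      = fluxRate fun z j => |π z * q z j| := by
  have key : ∀ g : Fin N → ℝ, (∀ i, 0 < g i) →
      -∑ z, π z * (∑ j, q z j * (g j - g z)) / g z
        = fluxSum g fun z j => |π z * q z j| := by
    intro g hg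
    rw [fluxSum, ← Finset.sum_neg_distrib]
    refine Finset.sum_congr rfl fun z _ => ?_
    rw [Finset.mul_sum, Finset.sum_div, ← Finset.sum_neg_distrib]
    refine Finset.sum_congr rfl fun j _ => ?_
    have hz := (hg z).ne'
    by_cases h : z = j
    · subst h
      simp [hz]
    · rw [abs_of_nonneg (mul_nonneg (hπ z) (hoff z j h))]
      field_simp
      ring
  rw [Real.sInf_def, neg_neg, fluxRate, iSup]
  congr 1
  ext s
  constructor
  · rintro ⟨g, hg, hs⟩
    exact ⟨⟨g, hg⟩, by beta_reduce; rw [← key g hg, ← hs, neg_neg]⟩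
  · rintro ⟨g, rfl⟩
    exact ⟨g.1, g.2, by beta_reduce; rw [← key g.1 g.2, neg_neg]⟩

end DonskerVaradhan

open DonskerVaradhan

/-- **Equicontinuity of the Donsker–Varadhan functional in the spatial variable.**
If `x ↦ q x` is a family of conservative irreducible rate matrices on `Fin N`,
uniformly bounded and locally Lipschitz on compacts, then for every compact `K`
the family `{x ↦ I(x, π) : π ∈ 𝒫(S)}` is uniformly equicontinuous on `K`. -/
theorem donsker_varadhan_equicontinuous
    {M : Type*} [MetricSpace M] (N : ℕ) (hN : 0 < N)
    (q : M → Fin N → Fin N → ℝ)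
    (hoff : ∀ x, ∀ i j, i ≠ j → 0 ≤ q x i j)
    (hcons : ∀ x, ∀ i, ∑ j, q x i j = 0)
    (hirr : ∀ x, ∀ i j : Fin N, i ≠ j → ∃ k : ℕ, ∃ path : Fin (k + 1) → Fin N,
      path 0 = i ∧ path (Fin.last k) = j ∧
      ∀ l : Fin k, 0 < q x (path l.castSucc) (path l.succ))
    (hbdd : ∃ C : ℝ, ∀ x, ∀ i, - q x i i ≤ C)
    (hlip : ∀ K : Set M, IsCompact K → ∃ C > (0:ℝ), ∀ x ∈ K, ∀ y ∈ K, ∀ i j,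
      |q x i j - q y i j| ≤ C * dist x y)
    (I : M → (Fin N → ℝ) → ℝ)
    (hI : ∀ x π, I x π = - sInf {s : ℝ | ∃ g : Fin N → ℝ, (∀ i, 0 < g i) ∧
      s = ∑ z, π z * (∑ j, q x z j * (g j - g z)) / g z}) :
    ∀ K : Set M, IsCompact K → ∀ ε > (0:ℝ), ∃ δ > (0:ℝ),
      ∀ π : Fin N → ℝ, (∀ i, 0 ≤ π i) → (∑ i, π i = 1) →
      ∀ x ∈ K, ∀ y ∈ K, dist x y < δ → |I x π - I y π| ≤ ε := by
  intro K hK ε hε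
  obtain ⟨C, hC⟩ := hbdd
  obtain ⟨L, hL, hlipK⟩ := hlip K hK
  have hdiag : ∀ x z, |q x z z| ≤ C ∧ ∀ j, j ≠ z → q x z j ≤ C := by
    intro x z
    have h := hcons x z
    rw [← Finset.add_sum_erase _ _ (Finset.mem_univ z)] at h
    have hnn : ∀ j ∈ Finset.univ.erase z, 0 ≤ q x z j := fun j hj =>
      hoff x z j (Finset.ne_of_mem_erase hj).symm
    have hsum := Finset.sum_nonneg hnn
    have hb := hC x z
    refine ⟨by rw [abs_of_nonpos (by linarith)]; exact hb, fun j hj => ?_⟩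
    have := Finset.single_le_sum hnn (Finset.mem_erase.2 ⟨hj, Finset.mem_univ j⟩)
    linarith
  have hq : ∀ x z j, |q x z j| ≤ C := by
    intro x z j
    by_cases h : j = z
    · subst h
      exact (hdiag x j).1
    · rw [abs_of_nonneg (hoff x z j (Ne.symm h))]
      exact (hdiag x z).2 j h
  have huc := isCompact_Icc.uniformContinuousOn_of_continuous (continuousOn_fluxRate (N := N) C)
  obtain ⟨δ, hδ, huc⟩ := Metric.uniformContinuousOn_iff.1 huc ε hε
  refine ⟨δ / L, div_pos hδ hL, fun π hπ hπ1 x hx y hy hxy => ?_⟩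
  have hπle : ∀ z, π z ≤ 1 := fun z => hπ1 ▸
    Finset.single_le_sum (fun i _ => hπ i) (Finset.mem_univ z)
  have hmem : ∀ x, (fun z j => |π z * q x z j|) ∈
      Set.Icc (0 : Fin N → Fin N → ℝ) (fun _ _ => C) := by
    refine fun x => ⟨fun z j => abs_nonneg _, fun z j => ?_⟩
    change |π z * q x z j| ≤ C
    rw [abs_mul, abs_of_nonneg (hπ z)]
    exact (mul_le_of_le_one_left (abs_nonneg _) (hπle z)).trans (hq x z j)
  rw [hI, hI, neg_sInf_eq_fluxRate (hoff x) hπ, neg_sInf_eq_fluxRate (hoff y) hπ]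
  refine (huc _ (hmem x) _ (hmem y) ?_).le
  refine (dist_pi_lt_iff hδ).2 fun z => (dist_pi_lt_iff hδ).2 fun j => ?_
  calc |(|π z * q x z j| - |π z * q y z j|)|
      ≤ |π z * q x z j - π z * q y z j| := abs_abs_sub_abs_le _ _
    _ = π z * |q x z j - q y z j| := by rw [← mul_sub, abs_mul, abs_of_nonneg (hπ z)]
    _ ≤ |q x z j - q y z j| := mul_le_of_le_one_left (abs_nonneg _) (hπle z)
    _ ≤ L * dist x y := hlipK x hx y hy z j
    _ < δ := by rwa [lt_div_iff₀' hL] at hxy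
end

section
/- Let H : ℝ^d × ℝ^d → ℝ be continuous, with p ↦ H(x,p) convex for every x and H(x,0) = 0 for all x, and let L be its Lagrangian. Then for every compact set K ⊆ ℝ^d and every c > 0 there exists a right-continuous nondecreasing function ψ : [0,∞) → [0,∞) with lim_{r → ∞} ψ(r)/r = 0 such that |⟨p,v⟩| ≤ ψ(L(x,v)) for all x ∈ K, all v ∈ ℝ^d, and all p ∈ ℝ^d with |p| ≤ c. -/
/-!
Let `M n` bound `H` on `K × closedBall 0 ((n + 1) c)`. Testing the supremum defining
`L(x,v) ≤ r` with the momenta `± (n + 1) p` gives `(n + 1) |⟨p,v⟩| ≤ r + M n` for `‖p‖ ≤ c`, hence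
`|⟨p,v⟩| ≤ ψ r` with `ψ r = inf_n (r + M n) / (n + 1)`. As an infimum of increasing affine
functions, `ψ` is nondecreasing and upper semicontinuous, hence right-continuous, and it is
sublinear because the slopes `1 / (n + 1)` tend to `0`.
-/

open scoped RealInnerProductSpace
open Filter

/-- The Lagrangian `L(x,v) = sup_p (⟨p,v⟩ − H(x,p))`, valued in `EReal`. -/
noncomputable def Lagrangian {d : ℕ}
    (H : EuclideanSpace ℝ (Fin d) → EuclideanSpace ℝ (Fin d) → ℝ)
    (x v : EuclideanSpace ℝ (Fin d)) : EReal :=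
  ⨆ p : EuclideanSpace ℝ (Fin d), ((⟪p, v⟫ - H x p : ℝ) : EReal)

/-- The infimum of the affine functions `r ↦ (r + M n) / (n + 1)`. -/
noncomputable def affineInf (M : ℕ → ℝ) (r : ℝ) : ℝ := ⨅ n : ℕ, (r + M n) / ((n : ℝ) + 1)

lemma affineInf_le {M : ℕ → ℝ} (hM : ∀ n, 0 ≤ M n) {r : ℝ} (hr : 0 ≤ r) (n : ℕ) :
    affineInf M r ≤ (r + M n) / ((n : ℝ) + 1) := by
  refine ciInf_le ⟨0, ?_⟩ n
  rintro _ ⟨k, rfl⟩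
  have := hM k
  positivity

lemma affineInf_nonneg {M : ℕ → ℝ} (hM : ∀ n, 0 ≤ M n) {r : ℝ} (hr : 0 ≤ r) :
    0 ≤ affineInf M r := by
  refine le_ciInf fun k => ?_
  have := hM k
  positivity

lemma affineInf_monotoneOn {M : ℕ → ℝ} (hM : ∀ n, 0 ≤ M n) :
    MonotoneOn (affineInf M) (Set.Ici 0) := by
  intro r hr s _ hrs
  refine le_ciInf fun k => (affineInf_le hM hr k).trans ?_
  gcongr

lemma affineInf_rightContinuous {M : ℕ → ℝ} (hM : ∀ n, 0 ≤ M n) {r : ℝ} (hr : 0 ≤ r) :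
    ContinuousWithinAt (affineInf M) (Set.Ici r) r := by
  refine tendsto_order.2 ⟨fun a ha => ?_, fun a ha => ?_⟩
  · filter_upwards [self_mem_nhdsWithin] with s hs
    exact ha.trans_le (affineInf_monotoneOn hM hr (hr.trans hs) hs)
  · obtain ⟨n, hn⟩ := exists_lt_of_ciInf_lt ha
    have hcont : Continuous fun s : ℝ => (s + M n) / ((n : ℝ) + 1) := by fun_prop
    filter_upwards [self_mem_nhdsWithin,
      nhdsWithin_le_nhds (hcont.continuousAt.eventually (gt_mem_nhds hn))] with s hs hs'
    exact (affineInf_le hM (hr.trans hs) n).trans_lt hs'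

lemma affineInf_div_tendsto {M : ℕ → ℝ} (hM : ∀ n, 0 ≤ M n) :
    Tendsto (fun r : ℝ => affineInf M r / r) atTop (nhds 0) := by
  refine tendsto_order.2 ⟨fun a ha => ?_, fun a ha => ?_⟩
  · filter_upwards [eventually_ge_atTop 0] with s hs
    exact ha.trans_le (div_nonneg (affineInf_nonneg hM hs) hs)
  · obtain ⟨n, hn⟩ := exists_nat_one_div_lt (half_pos ha)
    -- Beyond `2 M n / a` the constant term `M n / (n + 1)` is at most `(a / 2) r`.
    filter_upwards [eventually_gt_atTop 0, eventually_ge_atTop (2 * M n / a)] with s hs hs'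
    rw [div_lt_iff₀ hs]
    refine (affineInf_le hM hs.le n).trans_lt ?_
    have h1 : 1 / ((n : ℝ) + 1) * s < a / 2 * s := mul_lt_mul_of_pos_right hn hs
    have h2 : M n / ((n : ℝ) + 1) ≤ M n :=
      div_le_self (hM n) (by linarith [Nat.cast_nonneg (α := ℝ) n])
    rw [div_le_iff₀ ha] at hs'
    calc (s + M n) / ((n : ℝ) + 1)
        = 1 / ((n : ℝ) + 1) * s + M n / ((n : ℝ) + 1) := by ring
      _ < a * s := by linarith

/-- **Control of momenta pairings by the Lagrangian** (Proposition 5.6 (3), Euclidean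
chart): for every compact `K` and every `c > 0` there is a right-continuous
nondecreasing function `ψ : [0,∞) → [0,∞)` with `ψ(r)/r → 0` such that
`|⟨p,v⟩| ≤ ψ(L(x,v))` for `x ∈ K`, `v ∈ ℝ^d` and `‖p‖ ≤ c`
(formulated via all real upper bounds `r` of `L(x,v)`, which is equivalent by
monotonicity of `ψ`). -/
theorem lagrangian_controls_pairings
    {d : ℕ} (H : EuclideanSpace ℝ (Fin d) → EuclideanSpace ℝ (Fin d) → ℝ)
    (hHc : Continuous fun p : EuclideanSpace ℝ (Fin d) × EuclideanSpace ℝ (Fin d) => H p.1 p.2)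
    (hconv : ∀ x, ConvexOn ℝ Set.univ (H x))
    (hH0 : ∀ x, H x 0 = 0) :
    ∀ K : Set (EuclideanSpace ℝ (Fin d)), IsCompact K → ∀ c : ℝ, 0 < c →
      ∃ ψ : ℝ → ℝ,
        MonotoneOn ψ (Set.Ici 0) ∧
        (∀ r : ℝ, 0 ≤ r → 0 ≤ ψ r) ∧
        (∀ r : ℝ, 0 ≤ r → ContinuousWithinAt ψ (Set.Ici r) r) ∧
        Tendsto (fun r : ℝ => ψ r / r) atTop (nhds 0) ∧
        ∀ x ∈ K, ∀ v p : EuclideanSpace ℝ (Fin d), ‖p‖ ≤ c →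
          ∀ r : ℝ, Lagrangian H x v ≤ (r : EReal) → |⟪p, v⟫| ≤ ψ r := by
  intro K hK c hc
  have hbound : ∀ n : ℕ, ∃ C : ℝ, 0 ≤ C ∧ ∀ x ∈ K, ∀ q : EuclideanSpace ℝ (Fin d),
      ‖q‖ ≤ ((n : ℝ) + 1) * c → H x q ≤ C := by
    intro n
    obtain ⟨C, hC⟩ := (hK.prod (isCompact_closedBall (0 : EuclideanSpace ℝ (Fin d))
      (((n : ℝ) + 1) * c))).exists_bound_of_continuousOn hHc.continuousOn
    refine ⟨max C 0, le_max_right _ _, fun x hx q hq => ?_⟩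
    have h := hC (x, q) ⟨hx, by simpa using hq⟩
    exact (le_abs_self _).trans (h.trans (le_max_left _ _))
  choose M hM0 hM using hbound
  refine ⟨affineInf M, affineInf_monotoneOn hM0, fun r => affineInf_nonneg hM0,
    fun r => affineInf_rightContinuous hM0, affineInf_div_tendsto hM0, ?_⟩
  intro x hx v p hp r hr
  have htest : ∀ q, ⟪q, v⟫ - H x q ≤ r := fun q =>
    EReal.coe_le_coe_iff.1 ((le_iSup (fun q : EuclideanSpace ℝ (Fin d) =>
      ((⟪q, v⟫ - H x q : ℝ) : EReal)) q).trans hr)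
  refine le_ciInf fun n => ?_
  have hn : (0 : ℝ) < (n : ℝ) + 1 := by positivity
  rw [le_div_iff₀ hn]
  have key : ∀ q : EuclideanSpace ℝ (Fin d), ‖q‖ ≤ c → ⟪q, v⟫ * ((n : ℝ) + 1) ≤ r + M n := by
    intro q hq
    have h1 := htest (((n : ℝ) + 1) • q)
    have h2 := hM n x hx (((n : ℝ) + 1) • q) (by
      rw [norm_smul, Real.norm_of_nonneg hn.le]
      gcongr)
    rw [real_inner_smul_left] at h1
    linarith
  have h1 := key p hp
  have h2 := key (-p) (by rwa [norm_neg])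
  rw [inner_neg_left] at h2
  rcases abs_cases ⟪p, v⟫ with ⟨h, _⟩ | ⟨h, _⟩ <;> rw [h] <;> assumption
end

section
/- Let H : ℝ^d × ℝ^d → ℝ be continuous, with p ↦ H(x,p) convex for every x and H(x,0) = 0 for all x, and let L be its Lagrangian. Suppose Υ : ℝ^d → [0,∞) is continuously differentiable, has compact sublevel sets, and satisfies C_H := sup_{z ∈ ℝ^d} H(z, ∇Υ(z)) < ∞. Then for every compact K ⊆ ℝ^d, every T > 0 and every C ≥ 0, every absolutely continuous curve x : [0,T] → ℝ^d with x(0) ∈ K and ∫₀^T L(x(s), ẋ(s)) ds ≤ C satisfies Υ(x(t)) ≤ sup_{y ∈ K} Υ(y) + C + T·C_H for all t ∈ [0,T]; in particular there is a compact set K̂ (depending only on K, T, C) containing x(t) for all t ∈ [0,T] and all such curves. -/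
/-!
Along a curve `x` with velocity `x'`, the chain rule and the Fenchel–Young inequality
`⟪p, v⟫ ≤ L(x, v) + H(x, p)` at `p = ∇Υ(x)` give `d/dt Υ(x(t)) ≤ L(x, x') + C_H` for almost every
`t`. Since `Υ` is Lipschitz on bounded sets, `Υ ∘ x` is absolutely continuous, so this integrates to
`Υ(x(t)) ≤ Υ(x(0)) + ∫₀ᵗ L + t C_H`. The right-hand side is nondecreasing in `t`: `L ≥ 0`
because `H(x, 0) = 0`, and `C_H ≥ 0` because the gradient of `Υ` vanishes at a minimizer of `Υ`, which
exists by compactness of the sublevel sets. The set `K̂` is then a sublevel set of `Υ`.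

The integration step is `sub_le_integral_of_inner_gradient_le`, resting on
`absolutelyContinuousOnInterval_comp_primitive`; nonnegativity of `C_H` is
`nonneg_of_hamiltonian_gradient_le`.
-/

open scoped RealInnerProductSpace
open MeasureTheory

/-- Absolute continuity passes to any function whose increments are controlled by a constant
multiple of the increments of an absolutely continuous one. -/
theorem AbsolutelyContinuousOnInterval.of_dist_le {X Y : Type*} [PseudoMetricSpace X]
    [PseudoMetricSpace Y] {f : ℝ → X} {g : ℝ → Y} {a b : ℝ} {M : ℝ}
    (hf : AbsolutelyContinuousOnInterval f a b)
    (h : ∀ s ∈ Set.uIcc a b, ∀ t ∈ Set.uIcc a b, dist (g s) (g t) ≤ M * dist (f s) (f t)) :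
    AbsolutelyContinuousOnInterval g a b := by
  have hlim := Filter.Tendsto.const_mul M hf
  rw [mul_zero] at hlim
  refine squeeze_zero' (Filter.Eventually.of_forall fun E =>
    Finset.sum_nonneg fun _ _ => dist_nonneg) ?_ hlim
  refine Filter.Eventually.filter_mono inf_le_right (Filter.eventually_principal.2 ?_)
  intro E hE
  rw [Finset.mul_sum]
  exact Finset.sum_le_sum fun i hi => h _ (hE.1 i hi).1 _ (hE.1 i hi).2

/-- A `C¹` function composed with the primitive of an integrable velocity is absolutely continuous:
its increments are dominated by those of `t ↦ ∫₀ᵗ ‖v‖`. -/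
theorem absolutelyContinuousOnInterval_comp_primitive {E : Type*} [NormedAddCommGroup E]
    [NormedSpace ℝ E] [FiniteDimensional ℝ E] {Υ : E → ℝ} (hΥ : ContDiff ℝ 1 Υ)
    {v : ℝ → E} {T : ℝ} (hT : 0 ≤ T) (hv : IntervalIntegrable v volume 0 T) (x₀ : E) :
    AbsolutelyContinuousOnInterval (fun t => Υ (x₀ + ∫ s in (0:ℝ)..t, v s)) 0 T := by
  have hsub : ∀ s ∈ Set.Icc 0 T, ∀ t ∈ Set.Icc 0 T, IntervalIntegrable v volume s t := by
    intro s hs t ht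
    apply hv.mono_set
    rw [Set.uIcc_of_le hT]
    exact Set.uIcc_subset_Icc hs ht
  have h0 : (0:ℝ) ∈ Set.Icc 0 T := ⟨le_rfl, hT⟩
  set R := ∫ s in (0:ℝ)..T, ‖v s‖
  have hball : ∀ t ∈ Set.Icc 0 T,
      x₀ + ∫ s in (0:ℝ)..t, v s ∈ Metric.closedBall x₀ R := by
    intro t ht
    rw [Metric.mem_closedBall, dist_eq_norm, add_sub_cancel_left]
    exact (intervalIntegral.norm_integral_le_integral_norm ht.1).trans
      (intervalIntegral.integral_mono_interval le_rfl ht.1 ht.2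
        (Filter.Eventually.of_forall fun s => norm_nonneg _) hv.norm)
  obtain ⟨M, hM⟩ := (hΥ.contDiffOn (s := Metric.closedBall x₀ R)).exists_lipschitzOnWith
    one_ne_zero (convex_closedBall _ _) (isCompact_closedBall _ _)
  refine (hv.norm.absolutelyContinuousOnInterval_intervalIntegral
    Set.left_mem_uIcc).of_dist_le (M := M) ?_
  rw [Set.uIcc_of_le hT]
  intro s hs t ht
  refine (hM.dist_le_mul _ (hball s hs) _ (hball t ht)).trans ?_
  gcongr
  rw [dist_add_left, dist_eq_norm, dist_eq_norm,
    intervalIntegral.integral_interval_sub_left (hsub 0 h0 s hs) (hsub 0 h0 t ht),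
    intervalIntegral.integral_interval_sub_left (hsub 0 h0 s hs).norm (hsub 0 h0 t ht).norm]
  exact intervalIntegral.norm_integral_le_abs_integral_norm

/-- If the formal derivative `⟪∇Υ(x), x'⟫` of `Υ` along an absolutely continuous curve is bounded
by an integrable `g`, then the increment of `Υ` along the curve is bounded by `∫ g`. -/
theorem sub_le_integral_of_inner_gradient_le {E : Type*} [NormedAddCommGroup E]
    [InnerProductSpace ℝ E] [FiniteDimensional ℝ E] {Υ : E → ℝ} (hΥ : ContDiff ℝ 1 Υ)
    {x x' : ℝ → E} {g : ℝ → ℝ} {T : ℝ} (hT : 0 ≤ T) (hx' : IntervalIntegrable x' volume 0 T)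
    (hx : ∀ t ∈ Set.Icc (0:ℝ) T, x t = x 0 + ∫ s in (0:ℝ)..t, x' s)
    (hg : IntervalIntegrable g volume 0 T)
    (hle : ∀ s ∈ Set.Icc (0:ℝ) T, ⟪gradient Υ (x s), x' s⟫ ≤ g s) :
    Υ (x T) - Υ (x 0) ≤ ∫ s in (0:ℝ)..T, g s := by
  -- `x` is unconstrained outside `[0, T]`, so derivatives are taken of the primitive instead.
  have hac := absolutelyContinuousOnInterval_comp_primitive hΥ hT hx' (x 0)
  have hftc := hac.integral_deriv_eq_sub
  simp only [intervalIntegral.integral_same, add_zero] at hftc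
  rw [← hx T ⟨hT, le_rfl⟩] at hftc
  rw [← hftc]
  refine intervalIntegral.integral_mono_ae_restrict hT hac.intervalIntegrable_deriv hg ?_
  rw [Filter.EventuallyLE, ae_restrict_iff' measurableSet_Icc]
  filter_upwards [hx'.ae_hasDerivAt_integral] with s hs hsT
  have hder := (hs (by rwa [Set.uIcc_of_le hT]) 0 Set.left_mem_uIcc).const_add (x 0)
  have hgrad := ((hΥ.differentiable one_ne_zero)
    (x 0 + ∫ r in (0:ℝ)..s, x' r)).hasGradientAt.hasFDerivAt
  have hchain := hgrad.comp_hasDerivAt s hder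
  have hval : deriv (fun t => Υ (x 0 + ∫ r in (0:ℝ)..t, x' r)) s
      = ⟪gradient Υ (x 0 + ∫ r in (0:ℝ)..s, x' r), x' s⟫ := by
    simpa [Function.comp_def] using hchain.deriv
  rw [hval, ← hx s hsT]
  exact hle s hsT

/-- Evaluating at a minimizer of `Υ`, where the gradient vanishes, shows that any upper bound of
`z ↦ H(z, ∇Υ(z))` is nonnegative. -/
theorem nonneg_of_hamiltonian_gradient_le {E : Type*} [NormedAddCommGroup E]
    [InnerProductSpace ℝ E] [CompleteSpace E] {H : E → E → ℝ} (hH0 : ∀ x, H x 0 = 0)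
    {Υ : E → ℝ} (hΥ : Continuous Υ) (hΥcompact : ∀ c : ℝ, IsCompact {x | Υ x ≤ c})
    {CH : ℝ} (hCH : ∀ z, H z (gradient Υ z) ≤ CH) : 0 ≤ CH := by
  obtain ⟨z, hz, hmin⟩ := (hΥcompact (Υ 0)).exists_isMinOn ⟨0, le_refl (Υ 0)⟩ hΥ.continuousOn
  have hglob : ∀ y, Υ z ≤ Υ y := fun y =>
    (le_total (Υ y) (Υ 0)).elim (fun h => hmin h) (fun h => le_trans hz h)
  have hgrad : gradient Υ z = 0 := by
    have hloc : IsLocalMin Υ z := Filter.Eventually.of_forall hglob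
    rw [gradient, hloc.fderiv_eq_zero, map_zero]
  simpa [hgrad, hH0] using hCH z

/-- **Containment of curves with bounded Lagrangian cost** (Proposition 5.6 (2),
Euclidean chart): if `Υ` is a `C¹` good containment function for `H`, then every
absolutely continuous curve `x` on `[0,T]` starting in a compact `K` whose Lagrangian
cost (represented along the curve by the real-valued `ℓ`) is at most `C` satisfies
`Υ(x(t)) ≤ sup_K Υ + C + T·C_H`; in particular all such curves stay in a fixed
compact set `K̂` depending only on `K`, `T`, `C`. -/
theorem containment_of_bounded_cost_curves
    {d : ℕ} (H : EuclideanSpace ℝ (Fin d) → EuclideanSpace ℝ (Fin d) → ℝ)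
    (hHc : Continuous fun p : EuclideanSpace ℝ (Fin d) × EuclideanSpace ℝ (Fin d) => H p.1 p.2)
    (hconv : ∀ x, ConvexOn ℝ Set.univ (H x))
    (hH0 : ∀ x, H x 0 = 0)
    (Υ : EuclideanSpace ℝ (Fin d) → ℝ)
    (hΥreg : ContDiff ℝ 1 Υ) (hΥnn : ∀ x, 0 ≤ Υ x)
    (hΥcompact : ∀ c : ℝ, IsCompact {x | Υ x ≤ c})
    (CH : ℝ) (hCH : ∀ z, H z (gradient Υ z) ≤ CH) :
    ∀ K : Set (EuclideanSpace ℝ (Fin d)), IsCompact K → ∀ T : ℝ, 0 < T → ∀ C : ℝ, 0 ≤ C →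
      (∀ (x x' : ℝ → EuclideanSpace ℝ (Fin d)) (ℓ : ℝ → ℝ),
        x 0 ∈ K →
        IntervalIntegrable x' volume 0 T →
        (∀ t ∈ Set.Icc (0:ℝ) T, x t = x 0 + ∫ s in (0:ℝ)..t, x' s) →
        IntervalIntegrable ℓ volume 0 T →
        (∀ s ∈ Set.Icc (0:ℝ) T, (ℓ s : EReal) = Lagrangian H (x s) (x' s)) →
        (∫ s in (0:ℝ)..T, ℓ s) ≤ C →
        ∀ t ∈ Set.Icc (0:ℝ) T, Υ (x t) ≤ (⨆ y : K, Υ ↑y) + C + T * CH) ∧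
      ∃ Khat : Set (EuclideanSpace ℝ (Fin d)), IsCompact Khat ∧
        ∀ (x x' : ℝ → EuclideanSpace ℝ (Fin d)) (ℓ : ℝ → ℝ),
          x 0 ∈ K →
          IntervalIntegrable x' volume 0 T →
          (∀ t ∈ Set.Icc (0:ℝ) T, x t = x 0 + ∫ s in (0:ℝ)..t, x' s) →
          IntervalIntegrable ℓ volume 0 T →
          (∀ s ∈ Set.Icc (0:ℝ) T, (ℓ s : EReal) = Lagrangian H (x s) (x' s)) →
          (∫ s in (0:ℝ)..T, ℓ s) ≤ C →
          ∀ t ∈ Set.Icc (0:ℝ) T, x t ∈ Khat := by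
  intro K hK T hT C hC
  have hCH0 : 0 ≤ CH := nonneg_of_hamiltonian_gradient_le hH0 hΥreg.continuous hΥcompact hCH
  have hbound : ∀ (x x' : ℝ → EuclideanSpace ℝ (Fin d)) (ℓ : ℝ → ℝ),
      x 0 ∈ K →
      IntervalIntegrable x' volume 0 T →
      (∀ t ∈ Set.Icc (0:ℝ) T, x t = x 0 + ∫ s in (0:ℝ)..t, x' s) →
      IntervalIntegrable ℓ volume 0 T →
      (∀ s ∈ Set.Icc (0:ℝ) T, (ℓ s : EReal) = Lagrangian H (x s) (x' s)) →
      (∫ s in (0:ℝ)..T, ℓ s) ≤ C →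
      ∀ t ∈ Set.Icc (0:ℝ) T, Υ (x t) ≤ (⨆ y : K, Υ ↑y) + C + T * CH := by
    intro x x' ℓ hx0 hx' hx hℓ hL hcost t ht
    have hyoung : ∀ s ∈ Set.Icc (0:ℝ) T, ∀ p, ⟪p, x' s⟫ - H (x s) p ≤ ℓ s := by
      intro s hs p
      rw [← EReal.coe_le_coe_iff, hL s hs]
      exact le_iSup (fun p => ((⟪p, x' s⟫ - H (x s) p : ℝ) : EReal)) p
    have hℓ0 : ∀ s ∈ Set.Icc (0:ℝ) T, 0 ≤ ℓ s := by
      intro s hs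
      simpa [hH0] using hyoung s hs 0
    have hsub : Set.uIcc 0 t ⊆ Set.uIcc 0 T := by
      rw [Set.uIcc_of_le ht.1, Set.uIcc_of_le hT.le]
      exact Set.Icc_subset_Icc_right ht.2
    have hIcc : Set.Icc 0 t ⊆ Set.Icc 0 T := Set.Icc_subset_Icc_right ht.2
    have hℓt : IntervalIntegrable ℓ volume 0 t := hℓ.mono_set hsub
    have hinc : Υ (x t) - Υ (x 0) ≤ ∫ s in (0:ℝ)..t, (ℓ s + CH) := by
      refine sub_le_integral_of_inner_gradient_le hΥreg ht.1 (hx'.mono_set hsub)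
        (fun s hs => hx s (hIcc hs)) (hℓt.add intervalIntegrable_const) fun s hs => ?_
      linarith [hyoung s (hIcc hs) (gradient Υ (x s)), hCH (x s)]
    rw [intervalIntegral.integral_add hℓt intervalIntegrable_const,
      intervalIntegral.integral_const, sub_zero, smul_eq_mul] at hinc
    have hmono : ∫ s in (0:ℝ)..t, ℓ s ≤ ∫ s in (0:ℝ)..T, ℓ s := by
      refine intervalIntegral.integral_mono_interval le_rfl ht.1 ht.2 ?_ hℓ
      rw [Filter.EventuallyLE, ae_restrict_iff' measurableSet_Ioc]
      exact Filter.Eventually.of_forall fun s hs => hℓ0 s (Set.Ioc_subset_Icc_self hs)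
    have hsup : Υ (x 0) ≤ ⨆ y : K, Υ ↑y := by
      have hbdd : BddAbove (Set.range fun y : K => Υ ↑y) := by
        have := (hK.image hΥreg.continuous).bddAbove
        rwa [Set.image_eq_range] at this
      exact le_ciSup hbdd ⟨x 0, hx0⟩
    have hCHt : t * CH ≤ T * CH := mul_le_mul_of_nonneg_right ht.2 hCH0
    linarith
  exact ⟨hbound, {z | Υ z ≤ (⨆ y : K, Υ ↑y) + C + T * CH}, hΥcompact _, hbound⟩
end

section
/- Let S be a finite set and b : ℝ^d × S → ℝ^d satisfy the linear growth bound |b(x,i)| ≤ C_b(1 + |x|) for all x ∈ ℝ^d, i ∈ S, for some constant C_b > 0. Define Υ(x) = (1/2) log(1 + |x|²). Then Υ is smooth, Υ ≥ 0, Υ(0) = 0, every sublevel set {x : Υ(x) ≤ c} is compact, and sup_{x ∈ ℝ^d, i ∈ S} ( ⟨b(x,i), ∇Υ(x)⟩ + (1/2)|∇Υ(x)|² ) < ∞. -/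
/-!
The gradient of `Υ` is `x / (1+|x|²)`: it has norm at most `1` and decays like `1/|x|`, which
exactly compensates the linear growth of `b`. By Cauchy-Schwarz the drift term is at most
`Cb (1+r) r / (1+r²) ≤ 2 Cb` with `r = |x|`, so `2 Cb + 1/2` bounds the Hamiltonian. Compactness
of the sublevel sets holds because `Υ x ≤ c` forces `|x|² ≤ exp (2c)`.
-/

open scoped RealInnerProductSpace

theorem hasGradientAt_half_log_one_add_norm_sq {d : ℕ} (x : EuclideanSpace ℝ (Fin d)) :
    HasGradientAt (fun y : EuclideanSpace ℝ (Fin d) => (1/2) * Real.log (1 + ‖y‖^2))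
      ((1 + ‖x‖^2)⁻¹ • x) x := by
  have hpos : (1 + ‖x‖^2 : ℝ) ≠ 0 := by positivity
  rw [hasGradientAt_iff_hasFDerivAt]
  have h := (((hasStrictFDerivAt_norm_sq x).hasFDerivAt.const_add 1).log hpos).const_mul (1/2 : ℝ)
  refine h.congr_fderiv ?_
  ext v
  simp
  ring

/-- **`Υ(x) = ½ log(1+|x|²)` is a good containment function** (Lemma 5.5, Euclidean
chart): if `b` has linear growth, then `Υ` is smooth, nonnegative, vanishes at `0`,
has compact sublevel sets, and `⟨b(x,i), ∇Υ(x)⟩ + ½|∇Υ(x)|²` is bounded above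
uniformly in `x` and `i`. -/
theorem good_containment_function
    {d : ℕ} {ι : Type*} [Fintype ι] [Nonempty ι]
    (b : EuclideanSpace ℝ (Fin d) → ι → EuclideanSpace ℝ (Fin d))
    (Cb : ℝ) (hCb : 0 < Cb)
    (hb : ∀ x i, ‖b x i‖ ≤ Cb * (1 + ‖x‖))
    (Υ : EuclideanSpace ℝ (Fin d) → ℝ)
    (hΥ : ∀ x, Υ x = (1/2) * Real.log (1 + ‖x‖^2)) :
    ContDiff ℝ (⊤ : ℕ∞) Υ ∧
    (∀ x, 0 ≤ Υ x) ∧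
    Υ 0 = 0 ∧
    (∀ c : ℝ, IsCompact {x | Υ x ≤ c}) ∧
    ∃ C : ℝ, ∀ x i, ⟪b x i, gradient Υ x⟫ + (1/2) * ‖gradient Υ x‖^2 ≤ C := by
  obtain rfl : Υ = fun x => (1/2) * Real.log (1 + ‖x‖^2) := funext hΥ
  have hsmooth : ContDiff ℝ (⊤ : ℕ∞)
      (fun x : EuclideanSpace ℝ (Fin d) => (1/2) * Real.log (1 + ‖x‖^2)) :=
    contDiff_const.mul
      ((contDiff_const.add (contDiff_norm_sq ℝ)).log fun x => by positivity)
  refine ⟨hsmooth, fun x => ?_, by simp, fun c => ?_, 2 * Cb + 1/2, fun x i => ?_⟩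
  · have := Real.log_nonneg (show (1 : ℝ) ≤ 1 + ‖x‖^2 by nlinarith [sq_nonneg ‖x‖])
    positivity
  · refine Metric.isCompact_of_isClosed_isBounded
      (isClosed_le hsmooth.continuous continuous_const) ?_
    refine (Metric.isBounded_closedBall (x := 0) (r := √(Real.exp (2 * c)))).subset fun x hx => ?_
    have hx' : (1/2) * Real.log (1 + ‖x‖^2) ≤ c := hx
    have hexp : 1 + ‖x‖^2 ≤ Real.exp (2 * c) :=
      (Real.log_le_iff_le_exp (by positivity)).1 (by linarith)
    rw [mem_closedBall_zero_iff]
    exact Real.le_sqrt_of_sq_le (by linarith)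
  · rw [(hasGradientAt_half_log_one_add_norm_sq x).gradient]
    have hr : 0 ≤ ‖x‖ := norm_nonneg x
    have hpos : 0 < 1 + ‖x‖^2 := by positivity
    have hnorm : ‖(1 + ‖x‖^2)⁻¹ • x‖ = ‖x‖ / (1 + ‖x‖^2) := by
      rw [norm_smul, norm_inv, Real.norm_of_nonneg hpos.le, inv_mul_eq_div]
    have hle : ‖x‖ / (1 + ‖x‖^2) ≤ 1 := by
      rw [div_le_one hpos]
      nlinarith [sq_nonneg (‖x‖ - 1)]
    have hgrowth : (1 + ‖x‖) * (‖x‖ / (1 + ‖x‖^2)) ≤ 2 := by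
      rw [← mul_div_assoc, div_le_iff₀ hpos]
      nlinarith [sq_nonneg (‖x‖ - 1)]
    have hinner : ⟪b x i, (1 + ‖x‖^2)⁻¹ • x⟫ ≤ 2 * Cb := by
      calc ⟪b x i, (1 + ‖x‖^2)⁻¹ • x⟫
          ≤ ‖b x i‖ * (‖x‖ / (1 + ‖x‖^2)) := hnorm ▸ real_inner_le_norm _ _
        _ ≤ Cb * (1 + ‖x‖) * (‖x‖ / (1 + ‖x‖^2)) := by gcongr; exact hb x i
        _ = Cb * ((1 + ‖x‖) * (‖x‖ / (1 + ‖x‖^2))) := by ring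
        _ ≤ Cb * 2 := by gcongr
        _ = 2 * Cb := by ring
    have hsq : ‖(1 + ‖x‖^2)⁻¹ • x‖^2 ≤ 1 := by
      rw [hnorm]
      exact pow_le_one₀ (by positivity) hle
    linarith
end

section
/- Let H : ℝ^d × ℝ^d → ℝ be continuous with p ↦ H(x,p) convex for every x and H(x,0) = 0 for all x, and let L be its Lagrangian. Let K̂ ⊆ ℝ^d be compact and f : ℝ^d → ℝ continuously differentiable with c_f := sup_{z ∈ K̂} (−H(z, ∇f(z))) < ∞. Then there exists a constant C ≥ 0, depending only on H, K̂ and f, such that every absolutely continuous curve x : [0,T₀) → K̂ satisfying the Young equality for f (that is, ∫₀^t H(x(s),∇f(x(s))) ds + ∫₀^t L(x(s),ẋ(s)) ds = ∫₀^t ⟨∇f(x(s)), ẋ(s)⟩ ds for all t < T₀) obeys ∫₀^t L(x(s), ẋ(s)) ds ≤ C t for all t < T₀. -/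
/-!
The Fenchel–Young inequality at the doubled momentum `2∇f` reads
`2⟨∇f(x), ẋ⟩ ≤ L(x, ẋ) + H(x, 2∇f(x))`. Integrating it and replacing `∫ ⟨∇f(x), ẋ⟩` by means of
the Young equality leaves `2 ∫ L + 2 ∫ H(x, ∇f(x)) ≤ ∫ L + ∫ H(x, 2∇f(x))`, so that one copy of
`∫ L` is absorbed and `∫ L ≤ ∫ (H(x, 2∇f(x)) - 2 H(x, ∇f(x)))`. The last integrand is a continuous
function of `x`, hence bounded on the compact set `K̂`, and any nonnegative upper bound serves
as `C`.
-/

open scoped RealInnerProductSpace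
open MeasureTheory

theorem intervalIntegrable_inner_of_continuousOn {E : Type*} [NormedAddCommGroup E]
    [InnerProductSpace ℝ E] {g v : ℝ → E} {a b : ℝ}
    (hg : ContinuousOn g (Set.uIcc a b)) (hv : IntervalIntegrable v volume a b) :
    IntervalIntegrable (fun s => ⟪g s, v s⟫) volume a b := by
  refine (hv.norm.continuousOn_mul hg.norm).mono_fun ?_ ?_
  · exact ((hg.mono Set.uIoc_subset_uIcc).aestronglyMeasurable measurableSet_uIoc).inner
      hv.aestronglyMeasurable_restrict_uIoc
  · refine Filter.Eventually.of_forall fun s => ?_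
    simpa using norm_inner_le_norm (𝕜 := ℝ) (g s) (v s)

/-- **Linear-in-time bound on the Lagrangian cost** (Lemma 5.12, Euclidean chart):
for curves staying in a compact set `K̂` and satisfying the Young equality for a `C¹`
function `f` with `c_f = sup_{K̂} (−Hf) < ∞`, the Lagrangian cost (represented along the
curve by the real function `ℓ`) grows at most linearly in time, with a constant
depending only on `H`, `K̂` and `f`. -/
theorem lagrangian_cost_linear_growth
    {d : ℕ} (H : EuclideanSpace ℝ (Fin d) → EuclideanSpace ℝ (Fin d) → ℝ)
    (hHc : Continuous fun p : EuclideanSpace ℝ (Fin d) × EuclideanSpace ℝ (Fin d) => H p.1 p.2)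
    (hconv : ∀ x, ConvexOn ℝ Set.univ (H x))
    (hH0 : ∀ x, H x 0 = 0)
    (Khat : Set (EuclideanSpace ℝ (Fin d))) (hKhat : IsCompact Khat)
    (f : EuclideanSpace ℝ (Fin d) → ℝ) (hf : ContDiff ℝ 1 f)
    (cf : ℝ) (hcf : ∀ z ∈ Khat, - H z (gradient f z) ≤ cf) :
    ∃ C : ℝ, 0 ≤ C ∧ ∀ T₀ : ℝ, 0 < T₀ →
      ∀ (x x' : ℝ → EuclideanSpace ℝ (Fin d)) (ℓ : ℝ → ℝ),
        (∀ t, 0 ≤ t → t < T₀ → x t ∈ Khat) →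
        (∀ t, 0 ≤ t → t < T₀ → IntervalIntegrable x' volume 0 t ∧
          IntervalIntegrable ℓ volume 0 t ∧ x t = x 0 + ∫ s in (0:ℝ)..t, x' s) →
        (∀ s, 0 ≤ s → s < T₀ → (ℓ s : EReal) = Lagrangian H (x s) (x' s)) →
        (∀ t, 0 ≤ t → t < T₀ →
          (∫ s in (0:ℝ)..t, H (x s) (gradient f (x s))) + (∫ s in (0:ℝ)..t, ℓ s)
            = ∫ s in (0:ℝ)..t, ⟪gradient f (x s), x' s⟫) →
        ∀ t, 0 ≤ t → t < T₀ → (∫ s in (0:ℝ)..t, ℓ s) ≤ C * t := by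
  have hg : Continuous (gradient f) :=
    (InnerProductSpace.toDual ℝ (EuclideanSpace ℝ (Fin d))).symm.continuous.comp
      (hf.continuous_fderiv one_ne_zero)
  have hH1 : Continuous fun z => H z (gradient f z) := hHc.comp (continuous_id.prodMk hg)
  have hH2 : Continuous fun z => H z ((2 : ℝ) • gradient f z) :=
    hHc.comp (continuous_id.prodMk (hg.const_smul (2 : ℝ)))
  obtain ⟨M, hM⟩ := hKhat.bddAbove_image (hH2.sub (hH1.const_smul (2 : ℝ))).continuousOn
  refine ⟨max M 0, le_max_right _ _, ?_⟩
  intro T₀ _ x x' ℓ hxK hint hℓ hY t ht htT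
  obtain ⟨hx', hℓi, -⟩ := hint t ht htT
  have hx : ContinuousOn x (Set.uIcc 0 t) := by
    refine ((intervalIntegral.continuousOn_primitive_interval' hx'
      Set.left_mem_uIcc).const_add (x 0)).congr fun s hs => ?_
    rw [Set.uIcc_of_le ht] at hs
    exact (hint s hs.1 (hs.2.trans_lt htT)).2.2
  have hi1 : IntervalIntegrable (fun s => H (x s) (gradient f (x s))) volume 0 t :=
    (hH1.comp_continuousOn hx).intervalIntegrable
  have hip : IntervalIntegrable (fun s => ⟪gradient f (x s), x' s⟫) volume 0 t :=
    intervalIntegrable_inner_of_continuousOn (hg.comp_continuousOn hx) hx'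
  have key : ∀ s ∈ Set.Icc 0 t, 2 * ⟪gradient f (x s), x' s⟫
      ≤ ℓ s + 2 * H (x s) (gradient f (x s)) + max M 0 := by
    intro s hs
    have hsT := hs.2.trans_lt htT
    have hFY : ⟪(2 : ℝ) • gradient f (x s), x' s⟫ - H (x s) ((2 : ℝ) • gradient f (x s))
        ≤ ℓ s := by
      rw [← EReal.coe_le_coe_iff, hℓ s hs.1 hsT]
      exact le_iSup (fun p => ((⟪p, x' s⟫ - H (x s) p : ℝ) : EReal)) _
    have hb : H (x s) ((2 : ℝ) • gradient f (x s)) - 2 * H (x s) (gradient f (x s)) ≤ M :=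
      hM (Set.mem_image_of_mem _ (hxK s hs.1 hsT))
    rw [real_inner_smul_left] at hFY
    linarith [le_max_left M 0]
  have hmono := intervalIntegral.integral_mono_on ht (hip.const_mul 2)
    ((hℓi.add (hi1.const_mul 2)).add intervalIntegrable_const) key
  rw [intervalIntegral.integral_add (hℓi.add (hi1.const_mul 2)) intervalIntegrable_const,
    intervalIntegral.integral_add hℓi (hi1.const_mul 2), intervalIntegral.integral_const_mul,
    intervalIntegral.integral_const_mul, intervalIntegral.integral_const, sub_zero,
    smul_eq_mul] at hmono
  linarith [hY t ht htT]
end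

section
/- Let H : ℝ^d × ℝ^d → ℝ be continuous with p ↦ H(x,p) convex for every x and H(x,0) = 0 for all x, and let L be its Lagrangian. Let K ⊆ ℝ^d be compact, R > 0, and set K̂ = {y : dist(y,K) ≤ R}. Then there exists a constant C > 0, depending only on H, K, R, such that for every x₀ ∈ K and every absolutely continuous curve x : [0,T₀) → ℝ^d with x(0) = x₀, taking values in the closed ball of radius R/2 around x₀, and satisfying ∫₀^t L(x(s),ẋ(s)) ds ≤ C₁ t for all t < T₀ (for some C₁ entering into C) together with the a.e. identity (1/2)|x(t) − x₀|² = ∫₀^t ⟨x(s) − x₀, ẋ(s)⟩ ds, one has (1/2)|x(t) − x₀|² ≤ C t for all t < T₀. In particular, if T₀ is the first exit time of x from the open ball of radius R/2 around x₀, then T₀ ≥ R²/(8C). -/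
/-!
The Fenchel inequality `⟨p, v⟩ ≤ L(x, v) + H(x, p)` with `p = x(s) - x₀`, `v = ẋ(s)` already gives
the bound. The pairs `(x(s), x(s) - x₀)` stay in the compact set
`{y : dist(y, K) ≤ R/2} × {p : |p| ≤ R/2}`, on which `H` is bounded by some `M`; integrating
`⟨x(s) - x₀, ẋ(s)⟩ ≤ L(x(s), ẋ(s)) + M` over `[0, t]` yields `½|x(t) - x₀|² ≤ (C₁ + M) t`.
-/

open scoped RealInnerProductSpace
open MeasureTheory

/-- Fenchel's inequality, for a pair `(x, v)` at which the Lagrangian has a finite value `l`. -/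
theorem inner_le_add_of_eq_lagrangian {d : ℕ}
    {H : EuclideanSpace ℝ (Fin d) → EuclideanSpace ℝ (Fin d) → ℝ}
    {x v : EuclideanSpace ℝ (Fin d)} {l : ℝ} (hl : (l : EReal) = Lagrangian H x v)
    (p : EuclideanSpace ℝ (Fin d)) : ⟪p, v⟫ ≤ l + H x p := by
  have h : ((⟪p, v⟫ - H x p : ℝ) : EReal) ≤ l := by
    rw [hl]
    exact le_iSup (fun p : EuclideanSpace ℝ (Fin d) => ((⟪p, v⟫ - H x p : ℝ) : EReal)) p
  have := EReal.coe_le_coe_iff.1 h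
  linarith

/-- **Control on the displacement of low-cost curves** (Lemma 5.13, Euclidean chart):
there is `C > 0`, depending only on `H`, `K`, `R` (and the cost-rate `C₁`), such that
any absolutely continuous curve starting at `x₀ ∈ K`, staying in the closed ball of
radius `R/2` around `x₀`, with Lagrangian cost at most `C₁ t` and satisfying the
fundamental identity `½|x(t) − x₀|² = ∫₀ᵗ ⟨x(s) − x₀, ẋ(s)⟩ ds`, obeys
`½|x(t) − x₀|² ≤ C t`; in particular the curve cannot reach the boundary of the ball
of radius `R/2` before time `R²/(8C)`. -/
theorem displacement_control_of_low_cost_curves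
    {d : ℕ} (H : EuclideanSpace ℝ (Fin d) → EuclideanSpace ℝ (Fin d) → ℝ)
    (hHc : Continuous fun p : EuclideanSpace ℝ (Fin d) × EuclideanSpace ℝ (Fin d) => H p.1 p.2)
    (hconv : ∀ x, ConvexOn ℝ Set.univ (H x))
    (hH0 : ∀ x, H x 0 = 0)
    (K : Set (EuclideanSpace ℝ (Fin d))) (hK : IsCompact K)
    (R : ℝ) (hR : 0 < R)
    (C₁ : ℝ) (hC₁ : 0 ≤ C₁) :
    ∃ C : ℝ, 0 < C ∧ ∀ x₀ ∈ K, ∀ T₀ : ℝ, 0 < T₀ →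
      ∀ (x x' : ℝ → EuclideanSpace ℝ (Fin d)) (ℓ : ℝ → ℝ),
        x 0 = x₀ →
        (∀ t, 0 ≤ t → t < T₀ → x t ∈ Metric.closedBall x₀ (R/2)) →
        (∀ t, 0 ≤ t → t < T₀ → IntervalIntegrable x' volume 0 t ∧
          IntervalIntegrable ℓ volume 0 t ∧ x t = x 0 + ∫ s in (0:ℝ)..t, x' s) →
        (∀ s, 0 ≤ s → s < T₀ → (ℓ s : EReal) = Lagrangian H (x s) (x' s)) →
        (∀ t, 0 ≤ t → t < T₀ → (∫ s in (0:ℝ)..t, ℓ s) ≤ C₁ * t) →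
        (∀ t, 0 ≤ t → t < T₀ →
          (1/2) * ‖x t - x₀‖^2 = ∫ s in (0:ℝ)..t, ⟪x s - x₀, x' s⟫) →
        (∀ t, 0 ≤ t → t < T₀ → (1/2) * ‖x t - x₀‖^2 ≤ C * t) ∧
        (∀ t, 0 ≤ t → t < T₀ → t < R^2/(8*C) → ‖x t - x₀‖ < R/2) := by
  obtain ⟨M, hM⟩ := ((hK.cthickening (r := R / 2)).prod
    (isCompact_closedBall (0 : EuclideanSpace ℝ (Fin d)) (R / 2))).exists_bound_of_continuousOn
      hHc.continuousOn
  -- `|M| + 1` instead of `M` makes the constant positive, also when `K` is empty.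
  have hCpos : 0 < C₁ + |M| + 1 := by positivity
  refine ⟨C₁ + |M| + 1, hCpos, ?_⟩
  intro x₀ hx₀ T₀ _ x x' ℓ _ hball hAC hℓ hcost hid
  have key : ∀ t, 0 ≤ t → t < T₀ → (1/2) * ‖x t - x₀‖^2 ≤ (C₁ + |M| + 1) * t := by
    intro t ht0 htT
    rw [hid t ht0 htT]
    by_cases hint : IntervalIntegrable (fun s => ⟪x s - x₀, x' s⟫) volume 0 t
    · have hℓi := (hAC t ht0 htT).2.1
      have hle : (∫ s in (0:ℝ)..t, ⟪x s - x₀, x' s⟫) ≤ ∫ s in (0:ℝ)..t, (ℓ s + |M|) := by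
        refine intervalIntegral.integral_mono_on ht0 hint
          (hℓi.add intervalIntegrable_const) fun s hs => ?_
        have hsT := hs.2.trans_lt htT
        have hb := hball s hs.1 hsT
        have hmem : (x s, x s - x₀) ∈
            Metric.cthickening (R / 2) K ×ˢ Metric.closedBall 0 (R / 2) :=
          ⟨Metric.mem_cthickening_of_dist_le _ _ _ _ hx₀ hb, by
            simpa [dist_eq_norm] using hb⟩
        have hH := (le_abs_self _).trans ((hM _ hmem).trans (le_abs_self M))
        have hF := inner_le_add_of_eq_lagrangian (hℓ s hs.1 hsT) (x s - x₀)
        simp only at hH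
        linarith
      rw [intervalIntegral.integral_add hℓi intervalIntegrable_const,
        intervalIntegral.integral_const] at hle
      have := hcost t ht0 htT
      simp only [sub_zero, smul_eq_mul] at hle
      linarith
    · -- A non-integrable integrand has integral `0` by convention.
      rw [intervalIntegral.integral_undef hint]
      positivity
  refine ⟨key, fun t ht0 htT ht => ?_⟩
  have h1 := key t ht0 htT
  rw [lt_div_iff₀ (by positivity)] at ht
  refine lt_of_pow_lt_pow_left₀ 2 (by positivity) ?_
  linarith
end

section
/- Let H : ℝ^d × ℝ^d → ℝ be continuous with p ↦ H(x,p) convex for every x and H(x,0) = 0 for all x, and let L be its Lagrangian. Suppose there is a C¹ good containment function Υ : ℝ^d → [0,∞) with compact sublevel sets and sup_z H(z, ∇Υ(z)) < ∞. Let f : ℝ^d → ℝ be bounded and continuously differentiable with c_f := sup_z (−H(z, ∇f(z))) < ∞. Then for every initial point x₀ ∈ ℝ^d there exists an absolutely continuous curve x : [0,∞) → ℝ^d with x(0) = x₀ such that for all t > 0: ∫₀^t H(x(s), ∇f(x(s))) ds + ∫₀^t L(x(s), ẋ(s)) ds = ∫₀^t ⟨∇f(x(s)), ẋ(s)⟩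 ds. -/
/-!
Young's inequality `⟨∇f(x), v⟩ ≤ H(x, ∇f(x)) + L(x, v)` is an equality exactly when `v` belongs to
the subdifferential `∂ₚH(x, ∇f(x))`, so it suffices to solve the differential inclusion
`ẋ ∈ ∂ₚH(x, ∇f(x))` for all times.

Subgradients exist by Hahn-Banach (`exists_subgradient`). Testing the subgradient inequality at
`q = ∇Υ(x)` gives `⟨∇Υ(x) - ∇f(x), v⟩ ≤ H(x, ∇Υ(x)) - H(x, ∇f(x)) ≤ CH + cf`, so `Υ - f` grows at
most linearly along solutions; as `f` is bounded, `Υ(x(t)) ≤ R(t)` for an explicit affine `R`.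
A selection `v` of the subdifferential is multiplied by a continuous cutoff `φ(t, y)` which is `1`
where `Υ(y) ≤ R(t)` and `0` where `Υ(y) ≥ R(t) + 1`; the field `w = φ v` is bounded on bounded time
intervals, uniformly in space.

A limit of Euler schemes for `w` along an ultrafilter is a locally Lipschitz curve whose derivative
obeys every linear inequality that holds for `w` near the current point (`exists_euler_limit`).
Since the subgradient condition is a family of linear inequalities with continuous coefficients,
the limit satisfies `⟨q - ∇f(x), ẋ⟩ ≤ φ (H(x, q) - H(x, ∇f(x)))` for all `q`. The growth estimate
survives the factor `φ ∈ [0, 1]`, hence `Υ(x(t)) ≤ R(t)`, hence `φ = 1` along the curve.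
-/
open scoped RealInnerProductSpace
open MeasureTheory

open Set Filter Topology

section Aux

variable {E : Type*} [NormedAddCommGroup E] [InnerProductSpace ℝ E]

/-- A continuous convex function has a subgradient at every point: a hyperplane supporting the
open strict epigraph at `(p, φ p)` is not vertical, and its slope is the subgradient. -/
lemma exists_subgradient [CompleteSpace E] {φ : E → ℝ} (hφ : ConvexOn ℝ univ φ)
    (hc : Continuous φ) (p : E) : ∃ v : E, ∀ q, ⟪q - p, v⟫ ≤ φ q - φ p := by
  have hopen : IsOpen {z : E × ℝ | z.1 ∈ univ ∧ φ z.1 < z.2} := by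
    simpa using isOpen_lt (hc.comp continuous_fst) continuous_snd
  obtain ⟨L, hL⟩ := geometric_hahn_banach_open_point hφ.convex_strict_epigraph hopen
    (x := (p, φ p)) (by simp)
  have hsplit : ∀ q r, L (q, r) = L (q, 0) + r * L (0, 1) := by
    intro q r
    have : ((q, r) : E × ℝ) = (q, 0) + r • (0, 1) := by simp
    rw [this, map_add, map_smul, smul_eq_mul]
  set c := L (0, 1) with hc'
  have hcneg : c < 0 := by
    have := hL (p, φ p + 1) (by simp)
    rw [hsplit, hsplit p (φ p)] at this
    linarith
  have hle : ∀ q, L (q, 0) + φ q * c ≤ L (p, 0) + φ p * c := by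
    intro q
    have h : ∀ ε > 0, L (q, 0) + φ q * c ≤ L (p, 0) + φ p * c + ε := by
      intro ε hε
      have hpos : 0 < ε / (-c) := div_pos hε (by linarith)
      have := hL (q, φ q + ε / (-c)) (by simpa using hpos)
      rw [hsplit, hsplit p (φ p)] at this
      have h2 : ε / (-c) * c = -ε := by
        rw [div_neg, neg_mul, div_mul_cancel₀ _ hcneg.ne]
      nlinarith
    exact le_of_forall_pos_le_add h
  set l : StrongDual ℝ E := L.comp (ContinuousLinearMap.inl ℝ E ℝ) with hl
  refine ⟨(-c)⁻¹ • (InnerProductSpace.toDual ℝ E).symm l, fun q => ?_⟩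
  rw [real_inner_smul_right, real_inner_comm, InnerProductSpace.toDual_symm_apply,
    inv_mul_le_iff₀ (by linarith), map_sub]
  have := hle q
  simp only [hl, ContinuousLinearMap.comp_apply, ContinuousLinearMap.inl_apply]
  linarith

/-- The explicit Euler scheme with step `δ` for the (not necessarily continuous) field `w`,
started at `x₀`. -/
noncomputable def eulerSeq (w : ℝ → E → E) (x₀ : E) (δ : ℝ) : ℕ → E
  | 0 => x₀
  | k + 1 => eulerSeq w x₀ δ k + δ • w (k * δ) (eulerSeq w x₀ δ k)

lemma eulerSeq_dist_le {w : ℝ → E → E} {x₀ : E} {δ M T : ℝ} (hδ : 0 ≤ δ)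
    (hM : ∀ t ≤ T, ∀ y, ‖w t y‖ ≤ M) {j k : ℕ} (hjk : j ≤ k) (hk : k * δ ≤ T) :
    ‖eulerSeq w x₀ δ k - eulerSeq w x₀ δ j‖ ≤ M * (k * δ - j * δ) := by
  induction k, hjk using Nat.le_induction with
  | base => simp
  | succ k hk' ih =>
    push_cast at hk ⊢
    have h1 := ih (by nlinarith)
    have h2 := hM (k * δ) (by nlinarith) (eulerSeq w x₀ δ k)
    have h3 : ‖δ • w (k * δ) (eulerSeq w x₀ δ k)‖ ≤ δ * M := by
      rw [norm_smul, Real.norm_of_nonneg hδ]; gcongr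
    calc _ = ‖(eulerSeq w x₀ δ k - eulerSeq w x₀ δ j) + δ • w (k * δ) (eulerSeq w x₀ δ k)‖ := by
          rw [eulerSeq]; congr 1; abel
      _ ≤ _ := norm_add_le _ _
      _ ≤ M * (k * δ - j * δ) + δ * M := add_le_add h1 h3
      _ = _ := by ring

lemma eulerSeq_inner_le {w : ℝ → E → E} {x₀ : E} {δ b : ℝ} (hδ : 0 ≤ δ) (e : E)
    {j k : ℕ} (hjk : j ≤ k)
    (hb : ∀ i, j ≤ i → i < k → ⟪e, w (i * δ) (eulerSeq w x₀ δ i)⟫ ≤ b) :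
    ⟪e, eulerSeq w x₀ δ k - eulerSeq w x₀ δ j⟫ ≤ (k * δ - j * δ) * b := by
  induction k, hjk using Nat.le_induction with
  | base => simp
  | succ k hk' ih =>
    have h1 := ih fun i hi hik => hb i hi (hik.trans (Nat.lt_succ_self k))
    have h2 := hb k hk' (Nat.lt_succ_self k)
    have h3 : eulerSeq w x₀ δ (k + 1) - eulerSeq w x₀ δ j =
        (eulerSeq w x₀ δ k - eulerSeq w x₀ δ j) + δ • w (k * δ) (eulerSeq w x₀ δ k) := by
      rw [eulerSeq]; abel
    rw [h3, inner_add_right, real_inner_smul_right]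
    push_cast
    nlinarith

/-- For an arbitrary field `w`, bounded up to each time uniformly in space, the Euler schemes with
step `1 / (n + 1)` converge pointwise along an ultrafilter to a locally Lipschitz curve `x`. Where
`x` is differentiable, its derivative lies in every closed half-space containing the values of `w`
near `(s, x s)`. Pointwise convergence at `s` suffices for this because the schemes are equi-Lipschitz
up to an error of one step. -/
lemma exists_euler_limit [FiniteDimensional ℝ E] (w : ℝ → E → E)
    (hw : ∀ T, ∃ M, ∀ t ≤ T, ∀ y, ‖w t y‖ ≤ M) (x₀ : E) :
    ∃ x : ℝ → E, x 0 = x₀ ∧ (∀ T, ∃ K, LipschitzOnWith K x (Icc 0 T)) ∧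
      ∀ s, 0 < s → DifferentiableAt ℝ x s → ∀ (e : E) (b : ℝ),
        (∀ᶠ z in 𝓝 (s, x s), ⟪e, w z.1 z.2⟫ ≤ b) → ⟪e, deriv x s⟫ ≤ b := by
  choose M hM using hw
  have hM0 : ∀ T, 0 ≤ M T := fun T => (norm_nonneg _).trans (hM T T le_rfl 0)
  set δ : ℕ → ℝ := fun n => 1 / ((n : ℝ) + 1) with hδdef
  have hδ : ∀ n, 0 < δ n := fun n => Nat.one_div_pos_of_nat
  have hδlim : Tendsto δ (hyperfilter ℕ : Filter ℕ) (𝓝 0) :=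
    tendsto_one_div_add_atTop_nhds_zero_nat.mono_left Nat.hyperfilter_le_atTop
  set N : ℕ → ℝ → ℕ := fun n t => ⌊t / δ n⌋₊ with hN
  set X : ℕ → ℝ → E := fun n t => eulerSeq w x₀ (δ n) (N n t) with hX
  have hNle : ∀ n t, 0 ≤ t → N n t * δ n ≤ t := fun n t ht =>
    (le_div_iff₀ (hδ n)).1 (Nat.floor_le (div_nonneg ht (hδ n).le))
  have hNlt : ∀ n t, t < N n t * δ n + δ n := fun n t => by
    have := (div_lt_iff₀ (hδ n)).1 (Nat.lt_floor_add_one (t / δ n))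
    linarith
  have hNmono : ∀ n s t, s ≤ t → N n s ≤ N n t := fun n s t hst =>
    Nat.floor_le_floor (div_le_div_of_nonneg_right hst (hδ n).le)
  have hNlim : ∀ t, 0 ≤ t → Tendsto (fun n => N n t * δ n) (hyperfilter ℕ : Filter ℕ) (𝓝 t) := by
    intro t ht
    refine tendsto_of_tendsto_of_tendsto_of_le_of_le (g := fun n => t - δ n)
      (by simpa using tendsto_const_nhds.sub hδlim) tendsto_const_nhds ?_ ?_
    · intro n; have := hNlt n t; simp only; linarith
    · intro n; exact hNle n t ht
  have hXlip : ∀ n s t, 0 ≤ s → s ≤ t → ∀ T, t ≤ T →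
      ‖X n t - X n s‖ ≤ M T * (N n t * δ n - N n s * δ n) := fun n s t hs hst T hT =>
    eulerSeq_dist_le (hδ n).le (hM T) (hNmono n s t hst) ((hNle n t (hs.trans hst)).trans hT)
  have hX0 : ∀ n, X n 0 = x₀ := fun n => by simp [hX, hN, eulerSeq]
  -- the values `X n t` stay in a compact ball, hence converge along the ultrafilter
  have hlim : ∀ t, ∃ y, 0 ≤ t → Tendsto (fun n => X n t) (hyperfilter ℕ : Filter ℕ) (𝓝 y) := by
    intro t
    by_cases ht : 0 ≤ t
    swap
    · exact ⟨0, fun h => absurd h ht⟩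
    have hmem : ∀ n, X n t ∈ Metric.closedBall x₀ (M t * t) := by
      intro n
      have := hXlip n 0 t le_rfl ht t le_rfl
      rw [hX0] at this
      rw [mem_closedBall_iff_norm]
      refine this.trans (mul_le_mul_of_nonneg_left ?_ (hM0 t))
      have h1 := hNle n t ht
      have h2 : 0 ≤ (N n 0 : ℝ) * δ n := by have := hδ n; positivity
      linarith
    obtain ⟨y, -, hy⟩ := (isCompact_closedBall x₀ (M t * t)).ultrafilter_le_nhds
      ((hyperfilter ℕ).map fun n => X n t)
      (le_principal_iff.2 (Ultrafilter.mem_map.2 (Filter.univ_mem' hmem)))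
    exact ⟨y, fun _ => hy⟩
  choose x hx using hlim
  have hxlip : ∀ s t, 0 ≤ s → s ≤ t → ∀ T, t ≤ T → ‖x t - x s‖ ≤ M T * (t - s) := by
    intro s t hs hst T hT
    refine le_of_tendsto_of_tendsto' (((hx t (hs.trans hst)).sub (hx s hs)).norm)
      (((hNlim t (hs.trans hst)).sub (hNlim s hs)).const_mul (M T))
      fun n => hXlip n s t hs hst T hT
  refine ⟨x, ?_, fun T => ⟨(M T).toNNReal, ?_⟩, ?_⟩
  · refine tendsto_nhds_unique (hx 0 le_rfl) ?_
    simp only [hX0]; exact tendsto_const_nhds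
  · refine LipschitzOnWith.of_dist_le_mul fun t ht s hs => ?_
    rw [dist_eq_norm, Real.coe_toNNReal _ (hM0 T)]
    rcases le_total s t with h | h
    · rw [Real.dist_eq, abs_of_nonneg (by linarith)]
      exact hxlip s t hs.1 h T ht.2
    · rw [Real.dist_eq, abs_sub_comm, abs_of_nonneg (by linarith), norm_sub_rev]
      exact hxlip t s ht.1 h T hs.2
  · intro s hs hdiff e b hev
    obtain ⟨r, hr, hball⟩ := Metric.eventually_nhds_iff.1 hev
    set C := M (s + 1) with hC
    have hC0 : 0 ≤ C := hM0 _
    -- `h₀` and the bound `δ n < h₀` keep the nodes used below within `r` of `(s, x s)`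
    set h₀ : ℝ := min (min 1 (r / 2)) (r / (4 * (C + 1))) with hh₀
    have hh₀pos : 0 < h₀ := by positivity
    have hh1 : h₀ ≤ 1 := (min_le_left _ _).trans (min_le_left _ _)
    have hh2 : h₀ ≤ r / 2 := (min_le_left _ _).trans (min_le_right _ _)
    have hh3 : 2 * (C * h₀) ≤ r / 2 := by
      have : h₀ ≤ r / (4 * (C + 1)) := min_le_right _ _
      rw [le_div_iff₀ (by positivity)] at this
      nlinarith
    -- summing the Euler increments over the nodes in `[s, s + h)` and passing to the limit
    have key : ∀ h, 0 < h → h < h₀ → ⟪e, x (s + h) - x s⟫ ≤ h * b := by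
      intro h hh hhlt
      have hlim1 := (tendsto_const_nhds (x := e)).inner (𝕜 := ℝ)
        ((hx (s + h) (by linarith)).sub (hx s hs.le))
      have hlim2 := ((hNlim (s + h) (by linarith)).sub (hNlim s hs.le)).mul_const b
      have hfin : ∀ᶠ n in (hyperfilter ℕ : Filter ℕ),
          ⟪e, X n (s + h) - X n s⟫ ≤ (N n (s + h) * δ n - N n s * δ n) * b := by
        filter_upwards [(hx s hs.le).eventually (Metric.ball_mem_nhds (x s) (half_pos hr)),
          hδlim.eventually (gt_mem_nhds hh₀pos)] with n hn hδn
        refine eulerSeq_inner_le (hδ n).le e (hNmono n s (s + h) (by linarith)) ?_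
        intro i hi hiN
        have hδp := hδ n
        have hi1 : (N n s : ℝ) * δ n ≤ i * δ n := by gcongr
        have hi2 : (i : ℝ) * δ n ≤ N n (s + h) * δ n := by gcongr
        have h1 := hNlt n s
        have h2 := hNle n (s + h) (by linarith)
        have hd := eulerSeq_dist_le (x₀ := x₀) hδp.le (hM (s + 1)) hi
          (hi2.trans (h2.trans (by linarith)))
        refine hball (y := (i * δ n, eulerSeq w x₀ (δ n) i)) ?_
        rw [Prod.dist_eq, max_lt_iff]
        constructor
        · rw [Real.dist_eq, abs_lt]
          constructor <;> simp only <;> linarith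
        · rw [dist_eq_norm] at hn ⊢
          have hd2 : C * (i * δ n - N n s * δ n) ≤ C * (2 * h₀) :=
            mul_le_mul_of_nonneg_left (by linarith) hC0
          calc _ ≤ ‖eulerSeq w x₀ (δ n) i - X n s‖ + ‖X n s - x s‖ :=
                norm_sub_le_norm_sub_add_norm_sub _ _ _
            _ < r := by
              have : ‖eulerSeq w x₀ (δ n) i - X n s‖ ≤ C * (2 * h₀) := hd.trans hd2
              linarith
      have := le_of_tendsto_of_tendsto hlim1 hlim2 hfin
      simpa using this
    have hslope : Tendsto (fun h : ℝ => ⟪e, h⁻¹ • (x (s + h) - x s)⟫) (𝓝[>] 0)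
        (𝓝 ⟪e, deriv x s⟫) :=
      tendsto_const_nhds.inner
        ((hasDerivAt_iff_tendsto_slope_zero.1 hdiff.hasDerivAt).mono_left
          (nhdsWithin_mono _ fun y hy => ne_of_gt hy))
    refine le_of_tendsto hslope ?_
    filter_upwards [Ioo_mem_nhdsGT hh₀pos] with h hh
    rw [real_inner_smul_right, inv_mul_le_iff₀ hh.1]
    exact key h hh.1 hh.2

/-- The fundamental theorem of calculus for Lipschitz curves, reduced to the scalar case by pairing
with a fixed vector. -/
lemma lipschitzOn_deriv_ftc [FiniteDimensional ℝ E] {x : ℝ → E} {K : NNReal} {T : ℝ} (hT : 0 ≤ T)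
    (hx : LipschitzOnWith K x (Icc 0 T)) :
    IntervalIntegrable (deriv x) volume 0 T ∧ x T = x 0 + ∫ s in (0:ℝ)..T, deriv x s := by
  have hK : ∀ s ∈ Ioo 0 T, ‖deriv x s‖ ≤ K := fun s hs =>
    norm_deriv_le_of_lipschitzOn (Icc_mem_nhds hs.1 hs.2) hx
  have hint : IntervalIntegrable (deriv x) volume 0 T := by
    rw [intervalIntegrable_iff_integrableOn_Ioo_of_le hT]
    refine Measure.integrableOn_of_bounded (M := K) (by simp)
      (aestronglyMeasurable_deriv x _) ?_
    exact (ae_restrict_mem measurableSet_Ioo).mono hK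
  refine ⟨hint, ?_⟩
  have hac : AbsolutelyContinuousOnInterval x 0 T :=
    LipschitzOnWith.absolutelyContinuousOnInterval (by rwa [uIcc_of_le hT])
  rw [← sub_eq_iff_eq_add']
  refine ext_inner_left ℝ fun e => ?_
  have hg : AbsolutelyContinuousOnInterval (fun s => ⟪e, x s⟫) 0 T :=
    LipschitzOnWith.absolutelyContinuousOnInterval (K := ‖innerSL ℝ e‖₊ * K) (by
      rw [uIcc_of_le hT]
      exact (innerSL ℝ e).lipschitz.comp_lipschitzOnWith hx)
  have h1 := hg.integral_deriv_eq_sub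
  have h2 : ∫ s in (0:ℝ)..T, ⟪e, deriv x s⟫ = ⟪e, ∫ s in (0:ℝ)..T, deriv x s⟫ :=
    (innerSL ℝ e).intervalIntegral_comp_comm hint
  rw [← h2, inner_sub_right, ← h1]
  refine intervalIntegral.integral_congr_ae ?_
  filter_upwards [hac.boundedVariationOn.ae_differentiableAt_of_mem_uIcc] with s hs hs'
  exact ((innerSL ℝ e).hasFDerivAt.comp_hasDerivAt s
    (hs (uIoc_subset_uIcc hs')).hasDerivAt).deriv

end Aux

/-- **Global existence of optimally controlled curves** (Proposition 5.8, Euclidean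
chart): if `H` is continuous, convex in `p`, with `H(x,0)=0`, admits a `C¹` good
containment function `Υ`, and `f` is bounded, `C¹`, with `c_f = sup_z(−Hf(z)) < ∞`,
then from every initial point there is a global absolutely continuous curve along which
the Young equality `∫₀ᵗ H(x,∇f(x)) + ∫₀ᵗ L(x,ẋ) = ∫₀ᵗ ⟨∇f(x), ẋ⟩` holds for all
`t > 0` (the Lagrangian cost being represented along the curve by the real function `ℓ`). -/
theorem global_existence_young_equality
    {d : ℕ} (H : EuclideanSpace ℝ (Fin d) → EuclideanSpace ℝ (Fin d) → ℝ)
    (hHc : Continuous fun p : EuclideanSpace ℝ (Fin d) × EuclideanSpace ℝ (Fin d) => H p.1 p.2)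
    (hconv : ∀ x, ConvexOn ℝ Set.univ (H x))
    (hH0 : ∀ x, H x 0 = 0)
    (Υ : EuclideanSpace ℝ (Fin d) → ℝ)
    (hΥreg : ContDiff ℝ 1 Υ) (hΥnn : ∀ x, 0 ≤ Υ x)
    (hΥcompact : ∀ c : ℝ, IsCompact {x | Υ x ≤ c})
    (CH : ℝ) (hCH : ∀ z, H z (gradient Υ z) ≤ CH)
    (f : EuclideanSpace ℝ (Fin d) → ℝ)
    (hf : ContDiff ℝ 1 f) (hfb : ∃ Cf : ℝ, ∀ z, |f z| ≤ Cf)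
    (cf : ℝ) (hcf : ∀ z, - H z (gradient f z) ≤ cf) :
    ∀ x₀ : EuclideanSpace ℝ (Fin d),
      ∃ (x x' : ℝ → EuclideanSpace ℝ (Fin d)) (ℓ : ℝ → ℝ),
        x 0 = x₀ ∧
        (∀ t : ℝ, 0 < t → IntervalIntegrable x' volume 0 t ∧
          IntervalIntegrable ℓ volume 0 t) ∧
        (∀ t : ℝ, 0 ≤ t → x t = x 0 + ∫ s in (0:ℝ)..t, x' s) ∧
        (∀ᵐ s ∂(volume.restrict (Set.Ici (0:ℝ))),
          (ℓ s : EReal) = Lagrangian H (x s) (x' s)) ∧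
        ∀ t : ℝ, 0 < t →
          (∫ s in (0:ℝ)..t, H (x s) (gradient f (x s))) + (∫ s in (0:ℝ)..t, ℓ s)
            = ∫ s in (0:ℝ)..t, ⟪gradient f (x s), x' s⟫ := by
  intro x₀
  obtain ⟨Cf, hCf⟩ := hfb
  set p := gradient f with hp
  have hgrad : ∀ (g : EuclideanSpace ℝ (Fin d) → ℝ), ContDiff ℝ 1 g → Continuous (gradient g) :=
    fun g hg => (InnerProductSpace.toDual ℝ _).symm.continuous.comp
      (hg.continuous_fderiv one_ne_zero)
  have hpc : Continuous p := hgrad f hf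
  have hhc : Continuous fun y => H y (p y) := hHc.comp (continuous_id.prodMk hpc)
  choose v hv using fun y => exists_subgradient (hconv y)
    (hHc.comp (continuous_const.prodMk continuous_id)) (p y)
  set C := max (CH + cf) 0 with hC
  have hC0 : 0 ≤ C := le_max_right _ _
  -- an a priori bound for `Υ` at time `t` along the sought curve
  set R : ℝ → ℝ := fun t => Υ x₀ + 2 * Cf + C * t with hR
  -- the cutoff, active only where `Υ` exceeds that bound
  set φ : ℝ → EuclideanSpace ℝ (Fin d) → ℝ := fun t y => max 0 (min 1 (R t + 1 - Υ y)) with hφ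
  have hφ0 : ∀ t y, 0 ≤ φ t y := fun t y => le_max_left _ _
  have hφ1 : ∀ t y, φ t y ≤ 1 := fun t y => max_le zero_le_one (min_le_left _ _)
  have hφc : Continuous fun z : ℝ × EuclideanSpace ℝ (Fin d) => φ z.1 z.2 := by
    have := hΥreg.continuous
    simp only [hφ, hR]
    fun_prop
  set w : ℝ → EuclideanSpace ℝ (Fin d) → EuclideanSpace ℝ (Fin d) :=
    fun t y => φ t y • v y with hw
  have hwb : ∀ T, ∃ M, ∀ t ≤ T, ∀ y, ‖w t y‖ ≤ M := by
    intro T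
    have hcomp : IsCompact ({y | Υ y ≤ R T + 1} ×ˢ
        Metric.closedBall (0 : EuclideanSpace ℝ (Fin d)) 1) :=
      (hΥcompact _).prod (isCompact_closedBall _ _)
    have hcont : Continuous fun z : EuclideanSpace ℝ (Fin d) × EuclideanSpace ℝ (Fin d) =>
        H z.1 (p z.1 + z.2) - H z.1 (p z.1) :=
      (hHc.comp (continuous_fst.prodMk ((hpc.comp continuous_fst).add continuous_snd))).sub
        (hhc.comp continuous_fst)
    obtain ⟨B, hB⟩ := hcomp.exists_bound_of_continuousOn hcont.continuousOn
    refine ⟨max B 0, fun t ht y => ?_⟩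
    by_cases hy : Υ y ≤ R T + 1
    · have hvB : ‖v y‖ ≤ max B 0 := by
        rcases eq_or_ne (v y) 0 with h0 | h0
        · simp [h0]
        -- testing the subgradient inequality in the direction `v y / ‖v y‖`
        set u := ‖v y‖⁻¹ • v y with hu
        have hun : ‖u‖ = 1 := by simp [hu, norm_smul, h0]
        have h1 := hv y (p y + u)
        have h2 := (le_abs_self _).trans (hB (y, u) ⟨hy, by simp [hun]⟩)
        have h3 : ⟪u, v y⟫ = ‖v y‖ := by
          rw [hu, real_inner_smul_left, real_inner_self_eq_norm_sq]
          field_simp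
        rw [add_sub_cancel_left, h3] at h1
        exact (h1.trans h2).trans (le_max_left _ _)
      calc ‖w t y‖ = φ t y * ‖v y‖ := by rw [hw, norm_smul, Real.norm_of_nonneg (hφ0 t y)]
        _ ≤ 1 * ‖v y‖ := by gcongr; exact hφ1 t y
        _ ≤ _ := by simpa using hvB
    · have hRt : R t ≤ R T := by simp only [hR]; gcongr
      have : φ t y = 0 := max_eq_left ((min_le_right _ _).trans (by linarith))
      simp [hw, this]
  obtain ⟨x, hx0, hxlip, hxder⟩ := exists_euler_limit w hwb x₀
  have hxc : ContinuousOn x (Ici 0) := by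
    intro t ht
    obtain ⟨K, hK⟩ := hxlip (t + 1)
    refine ((hK.continuousOn t ⟨ht, by linarith⟩).mono_of_mem_nhdsWithin ?_)
    rw [← Ici_inter_Iic]
    exact inter_mem_nhdsWithin _ (Iic_mem_nhds (by linarith))
  have hxd : ∀ T, 0 ≤ T → ∀ᵐ s, s ∈ uIcc 0 T → DifferentiableAt ℝ x s := by
    intro T hT
    obtain ⟨K, hK⟩ := hxlip T
    rw [← uIcc_of_le hT] at hK
    exact hK.absolutelyContinuousOnInterval.boundedVariationOn.ae_differentiableAt_of_mem_uIcc
  have hincl : ∀ s, 0 < s → DifferentiableAt ℝ x s → ∀ q,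
      ⟪q - p (x s), deriv x s⟫ ≤ φ s (x s) * (H (x s) q - H (x s) (p (x s))) := by
    intro s hs hd q
    obtain ⟨M, hM⟩ := hwb (s + 1)
    refine le_of_forall_pos_lt_add fun ε hε => ?_
    -- the second summand pays for replacing `p z.2` by the fixed vector `p (x s)`
    have hcont : Continuous fun z : ℝ × EuclideanSpace ℝ (Fin d) =>
        φ z.1 z.2 * (H z.2 q - H z.2 (p z.2)) + ‖p z.2 - p (x s)‖ * M := by
      have h1 : Continuous fun z : ℝ × EuclideanSpace ℝ (Fin d) => H z.2 q :=
        hHc.comp (continuous_snd.prodMk continuous_const)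
      have h2 := hhc.comp (continuous_snd (X := ℝ))
      have h3 := hpc.comp (continuous_snd (X := ℝ))
      exact (hφc.mul (h1.sub h2)).add ((h3.sub continuous_const).norm.mul continuous_const)
    have hev := (hcont.tendsto (s, x s)).eventually (gt_mem_nhds (lt_add_of_pos_right _
      (half_pos hε)))
    have hev2 : ∀ᶠ z : ℝ × EuclideanSpace ℝ (Fin d) in 𝓝 (s, x s), z.1 ≤ s + 1 :=
      (continuous_fst.tendsto (s, x s)).eventually (Iic_mem_nhds (by simp))
    refine (hxder s hs hd (q - p (x s)) _ ?_).trans_lt (b := φ s (x s) *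
      (H (x s) q - H (x s) (p (x s))) + ε / 2) (by linarith)
    filter_upwards [hev, hev2] with z hz hz2
    have h1 : ⟪q - p (x s), w z.1 z.2⟫ = φ z.1 z.2 * ⟪q - p z.2, v z.2⟫
        + ⟪p z.2 - p (x s), w z.1 z.2⟫ := by
      rw [hw, ← real_inner_smul_right, ← inner_add_left]; congr 1; abel
    have h2 : ⟪p z.2 - p (x s), w z.1 z.2⟫ ≤ ‖p z.2 - p (x s)‖ * M :=
      (real_inner_le_norm _ _).trans (by gcongr; exact hM _ hz2 _)
    have h3 := mul_le_mul_of_nonneg_left (hv z.2 q) (hφ0 z.1 z.2)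
    simp only [sub_self, norm_zero, zero_mul, add_zero] at hz
    linarith
  -- `Υ - f` grows at most linearly, so the cutoff is never active
  have hcontain : ∀ t, 0 ≤ t → Υ (x t) ≤ R t := by
    intro t ht
    obtain ⟨K, hK⟩ := hxlip t
    have hGreg : ContDiff ℝ 1 fun y => Υ y - f y := hΥreg.sub hf
    obtain ⟨K', hK'⟩ := (hGreg.locallyLipschitz.locallyLipschitzOn
      (s := x '' Icc 0 t)).exists_lipschitzOnWith_of_compact
      (isCompact_Icc.image_of_continuousOn hK.continuousOn)
    have hac : AbsolutelyContinuousOnInterval (fun s => Υ (x s) - f (x s)) 0 t :=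
      LipschitzOnWith.absolutelyContinuousOnInterval (K := K' * K) (by
        rw [uIcc_of_le ht]
        exact hK'.comp hK (mapsTo_image _ _))
    have h1 := hac.integral_deriv_eq_sub
    have h2 : ∫ s in (0:ℝ)..t, deriv (fun s => Υ (x s) - f (x s)) s ≤ ∫ s in (0:ℝ)..t, C := by
      refine intervalIntegral.integral_mono_ae_restrict ht hac.intervalIntegrable_deriv
        intervalIntegrable_const ?_
      have hne : ∀ᵐ s : ℝ, s ≠ 0 := by simp [ae_iff]
      filter_upwards [ae_restrict_mem measurableSet_Icc, ae_restrict_of_ae (hxd t ht),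
        ae_restrict_of_ae hne] with s hs hsd hs0
      have hd := hsd (by rwa [uIcc_of_le ht])
      have hder : ∀ g : EuclideanSpace ℝ (Fin d) → ℝ, ContDiff ℝ 1 g →
          HasDerivAt (fun s => g (x s)) ⟪gradient g (x s), deriv x s⟫ s := by
        intro g hg
        rw [gradient, InnerProductSpace.toDual_symm_apply]
        exact (hg.differentiable one_ne_zero (x s)).hasFDerivAt.comp_hasDerivAt s hd.hasDerivAt
      rw [((hder Υ hΥreg).fun_sub (hder f hf)).deriv, ← inner_sub_left]
      refine (hincl s (lt_of_le_of_ne hs.1 (Ne.symm hs0)) hd _).trans ?_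
      have h3 : H (x s) (gradient Υ (x s)) - H (x s) (p (x s)) ≤ C :=
        le_trans (by linarith [hCH (x s), hcf (x s)]) (le_max_left _ _)
      have h4 := hφ0 s (x s)
      have h5 := hφ1 s (x s)
      nlinarith
    rw [h1, hx0] at h2
    simp only [intervalIntegral.integral_const, sub_zero, smul_eq_mul] at h2
    have h3 := abs_le.1 (hCf x₀)
    have h4 := abs_le.1 (hCf (x t))
    simp only [hR]
    linarith
  have hφeq : ∀ t, 0 ≤ t → φ t (x t) = 1 := by
    intro t ht
    have := hcontain t ht
    simp only [hφ]
    rw [min_eq_left (by linarith), max_eq_right zero_le_one]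
  have hint : ∀ t, 0 < t → IntervalIntegrable (deriv x) volume 0 t ∧
      x t = x 0 + ∫ s in (0:ℝ)..t, deriv x s := fun t ht =>
    (hxlip t).elim fun K hK => lipschitzOn_deriv_ftc ht.le hK
  have hinth : ∀ t, 0 < t → IntervalIntegrable (fun s => H (x s) (p (x s))) volume 0 t := by
    intro t ht
    refine ContinuousOn.intervalIntegrable ?_
    rw [uIcc_of_le ht.le]
    exact hhc.comp_continuousOn (hxc.mono Icc_subset_Ici_self)
  have hinti : ∀ t, 0 < t → IntervalIntegrable (fun s => ⟪p (x s), deriv x s⟫) volume 0 t := by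
    intro t ht
    have hpx : ContinuousOn (fun s => p (x s)) (uIcc 0 t) := by
      rw [uIcc_of_le ht.le]
      exact hpc.comp_continuousOn (hxc.mono Icc_subset_Ici_self)
    obtain ⟨B, hB⟩ := isCompact_uIcc.exists_bound_of_continuousOn hpx
    have hd := (hint t ht).1
    rw [intervalIntegrable_iff] at hd ⊢
    refine (hd.norm.const_mul B).mono'
      ((((hpx.mono uIoc_subset_uIcc).aestronglyMeasurable measurableSet_uIoc)).inner
        hd.aestronglyMeasurable) ?_
    filter_upwards [ae_restrict_mem measurableSet_uIoc] with s hs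
    exact (norm_inner_le_norm _ _).trans (by gcongr; exact hB s (uIoc_subset_uIcc hs))
  refine ⟨x, deriv x, fun s => ⟪p (x s), deriv x s⟫ - H (x s) (p (x s)), hx0, ?_, ?_, ?_, ?_⟩
  · exact fun t ht => ⟨(hint t ht).1, (hinti t ht).sub (hinth t ht)⟩
  · intro t ht
    rcases ht.eq_or_lt with rfl | ht
    · simp
    · exact (hint t ht).2
  · have hall : ∀ᵐ s : ℝ, ∀ n : ℕ, s ∈ uIcc (0:ℝ) n → DifferentiableAt ℝ x s :=
      ae_all_iff.2 fun n => hxd n n.cast_nonneg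
    have hne : ∀ᵐ s : ℝ, s ≠ 0 := by simp [ae_iff]
    filter_upwards [ae_restrict_mem measurableSet_Ici, ae_restrict_of_ae hall,
      ae_restrict_of_ae hne] with s hs hsd hs0
    obtain ⟨n, hn⟩ := exists_nat_ge s
    have hd := hsd n (by rw [uIcc_of_le n.cast_nonneg]; exact ⟨hs, hn⟩)
    -- the supremum defining the Lagrangian is attained at `q = ∇f (x s)`
    refine le_antisymm (le_iSup (fun q => ((⟪q, deriv x s⟫ - H (x s) q : ℝ) : EReal)) (p (x s)))
      (iSup_le fun q => EReal.coe_le_coe_iff.2 ?_)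
    have := hincl s (lt_of_le_of_ne hs (Ne.symm hs0)) hd q
    rw [hφeq s hs, one_mul, inner_sub_left] at this
    linarith
  · intro t ht
    rw [intervalIntegral.integral_sub (hinti t ht) (hinth t ht)]
    abel
end

section
/- Let H : ℝ^d × ℝ^d → ℝ be continuous with p ↦ H(x,p) convex for every x and H(x,0) = 0 for all x, and let L be its Lagrangian. Suppose there is a C¹ good containment function Υ : ℝ^d → [0,∞) with compact sublevel sets and sup_z H(z, ∇Υ(z)) < ∞. Let f : ℝ^d → ℝ be bounded and continuously differentiable with c_f := sup_z (−H(z, ∇f(z))) < ∞, and let K₀ ⊆ ℝ^d be compact and T > 0. Then there is a compact set K̂ ⊆ ℝ^d such that every absolutely continuous curve x : [0,T₀) → ℝ^d with T₀ ≤ T, x(0) ∈ K₀, satisfying the Young equality for f on [0,T₀), obeys ∫₀^t L(x(s),ẋ(s)) ds ≤ 2 sup|f| + T c_f and x(t) ∈ K̂ for all t < T₀. -/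
/-!
The classical energy estimate. For a curve with integrable velocity and a `C¹` function `g`, the
chain rule `∫₀ᵗ ⟨∇g(x), ẋ⟩ = g(x(t)) - g(x(0))` holds (`young_chain_rule`). Applied to `f` and
combined with the Young equality and `-H(z, ∇f(z)) ≤ c_f` it gives
`∫₀ᵗ L ≤ 2 sup|f| + t c_f`. Replacing `t` by `T` needs `0 ≤ c_f`, which follows from the containment
function: `f - εΥ` has a maximum point `z`, where `∇f(z) = ε∇Υ(z)`, so convexity and `H(z,0) = 0`
give `-c_f ≤ H(z, ε∇Υ(z)) ≤ ε sup_z H(z, ∇Υ(z))`, and `ε → 0` (`young_const_nonneg`).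
Applied to `Υ`, the chain rule and the Fenchel inequality `⟨∇Υ, ẋ⟩ ≤ H(x, ∇Υ) + L(x, ẋ)` bound
`Υ(x(t))` in terms of `max_{K₀} Υ`, `T`, `sup_z H(z, ∇Υ(z))` and the bound on the cost, so the curve
stays in a fixed sublevel set of `Υ`.
-/

open scoped RealInnerProductSpace
open MeasureTheory

/-- A function whose increments are dominated, up to a constant factor, by those of an absolutely
continuous real function is absolutely continuous. -/
lemma absolutelyContinuousOnInterval_of_dist_le {u N : ℝ → ℝ} {a b : ℝ} (C : ℝ) (hC : 0 ≤ C)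
    (hN : AbsolutelyContinuousOnInterval N a b)
    (h : ∀ r ∈ Set.uIcc a b, ∀ s ∈ Set.uIcc a b, dist (u r) (u s) ≤ C * dist (N r) (N s)) :
    AbsolutelyContinuousOnInterval u a b := by
  rw [absolutelyContinuousOnInterval_iff] at hN ⊢
  intro ε hε
  obtain ⟨δ, hδ, hN⟩ := hN (ε / (C + 1)) (by positivity)
  refine ⟨δ, hδ, fun E hE hlen => ?_⟩
  have h1 := hN E hE hlen
  calc ∑ i ∈ Finset.range E.1, dist (u (E.2 i).1) (u (E.2 i).2)
      ≤ ∑ i ∈ Finset.range E.1, C * dist (N (E.2 i).1) (N (E.2 i).2) :=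
        Finset.sum_le_sum fun i hi => h _ (hE.1 i hi).1 _ (hE.1 i hi).2
    _ = C * ∑ i ∈ Finset.range E.1, dist (N (E.2 i).1) (N (E.2 i).2) := by
        rw [Finset.mul_sum]
    _ ≤ C * (ε / (C + 1)) := by gcongr
    _ < (C + 1) * (ε / (C + 1)) := by gcongr; linarith
    _ = ε := by field_simp

/-- Chain rule for a `C¹` function along the primitive of an integrable velocity. Composing with
`g`, which is Lipschitz on the compact trace of the curve, keeps absolute continuity, so the
fundamental theorem of calculus applies to `g ∘ x`. -/
lemma young_chain_rule {d : ℕ} {g : EuclideanSpace ℝ (Fin d) → ℝ} (hg : ContDiff ℝ 1 g)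
    {x x' : ℝ → EuclideanSpace ℝ (Fin d)} {t : ℝ} (ht : 0 ≤ t)
    (hx' : IntervalIntegrable x' volume 0 t)
    (hx : ∀ s ∈ Set.Icc 0 t, x s = x 0 + ∫ r in (0:ℝ)..s, x' r) :
    ContinuousOn x (Set.Icc 0 t) ∧
    IntervalIntegrable (fun s => ⟪gradient g (x s), x' s⟫) volume 0 t ∧
    ∫ s in (0:ℝ)..t, ⟪gradient g (x s), x' s⟫ = g (x t) - g (x 0) := by
  have huIcc : Set.uIcc 0 t = Set.Icc 0 t := Set.uIcc_of_le ht
  -- the primitive `y` agrees with `x` on `[0, t]`, where it is differentiable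
  -- almost everywhere by the Lebesgue differentiation theorem
  let y : ℝ → EuclideanSpace ℝ (Fin d) := fun s => x 0 + ∫ r in (0:ℝ)..s, x' r
  have hycont : ContinuousOn y (Set.Icc 0 t) := by
    have := intervalIntegral.continuousOn_primitive_interval' hx' Set.left_mem_uIcc
    rw [huIcc] at this
    exact continuousOn_const.add this
  have hxcont : ContinuousOn x (Set.Icc 0 t) := hycont.congr hx
  have hsub : ∀ r ∈ Set.uIcc 0 t, ∀ s ∈ Set.uIcc 0 t, IntervalIntegrable x' volume r s :=
    fun r hr s hs => hx'.mono_set (Set.uIcc_subset_uIcc hr hs)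
  obtain ⟨K, hK⟩ := (hg.locallyLipschitz.locallyLipschitzOn
    (s := y '' Set.Icc 0 t)).exists_lipschitzOnWith_of_compact
      (isCompact_Icc.image_of_continuousOn hycont)
  have hac : AbsolutelyContinuousOnInterval (fun s => g (y s)) 0 t := by
    refine absolutelyContinuousOnInterval_of_dist_le K K.2
      (hx'.norm.absolutelyContinuousOnInterval_intervalIntegral Set.left_mem_uIcc) ?_
    intro r hr s hs
    have h0 : (0:ℝ) ∈ Set.uIcc 0 t := Set.left_mem_uIcc
    refine (hK.dist_le_mul _ (Set.mem_image_of_mem y (huIcc ▸ hr)) _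
      (Set.mem_image_of_mem y (huIcc ▸ hs))).trans ?_
    refine mul_le_mul_of_nonneg_left ?_ K.2
    simp only [y]
    rw [dist_add_left, dist_eq_norm, Real.dist_eq,
      intervalIntegral.integral_interval_sub_left (hsub 0 h0 r hr) (hsub 0 h0 s hs),
      intervalIntegral.integral_interval_sub_left (hsub 0 h0 r hr).norm (hsub 0 h0 s hs).norm]
    exact intervalIntegral.norm_integral_le_abs_integral_norm
  have hae : ∀ᵐ s, s ∈ Set.uIoc 0 t → deriv (fun s => g (y s)) s = ⟪gradient g (x s), x' s⟫ := by
    filter_upwards [hx'.ae_hasDerivAt_integral] with s hs hmem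
    have hs' := Set.uIoc_subset_uIcc hmem
    have h1 : HasDerivAt y (x' s) s := (hs hs' 0 Set.left_mem_uIcc).const_add (x 0)
    have h2 := ((hg.differentiable one_ne_zero (y s)).hasFDerivAt).comp_hasDerivAt s h1
    rw [inner_gradient_left, hx s (huIcc ▸ hs')]
    exact h2.deriv
  refine ⟨hxcont, ?_, ?_⟩
  · refine hac.intervalIntegrable_deriv.congr_ae ?_
    rw [Filter.EventuallyEq, ae_restrict_iff' measurableSet_uIoc]
    exact hae
  · rw [← intervalIntegral.integral_congr_ae hae, hac.integral_deriv_eq_sub,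
      hx t ⟨ht, le_rfl⟩]
    simp [y]

/-- A bounded `C¹` function cannot have `H(z, ∇f(z))` bounded below by a positive constant when a
containment function exists. -/
lemma young_const_nonneg {d : ℕ} {H : EuclideanSpace ℝ (Fin d) → EuclideanSpace ℝ (Fin d) → ℝ}
    (hconv : ∀ x, ConvexOn ℝ Set.univ (H x)) (hH0 : ∀ x, H x 0 = 0)
    {Υ : EuclideanSpace ℝ (Fin d) → ℝ} (hΥreg : ContDiff ℝ 1 Υ)
    (hΥcompact : ∀ c : ℝ, IsCompact {x | Υ x ≤ c})
    {CH : ℝ} (hCH : ∀ z, H z (gradient Υ z) ≤ CH)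
    {f : EuclideanSpace ℝ (Fin d) → ℝ} (hf : ContDiff ℝ 1 f) {Cf : ℝ} (hfb : ∀ z, |f z| ≤ Cf)
    {cf : ℝ} (hcf : ∀ z, - H z (gradient f z) ≤ cf) : 0 ≤ cf := by
  have key : ∀ ε : ℝ, 0 < ε → ε ≤ 1 → -cf ≤ ε * CH := by
    intro ε hε hε1
    have hcont : Continuous fun z => ε * Υ z - f z :=
      (continuous_const.mul hΥreg.continuous).sub hf.continuous
    -- outside this sublevel set, `ε Υ - f` exceeds its value at the origin
    have hlarge : ∀ᶠ z in Filter.cocompact (EuclideanSpace ℝ (Fin d)),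
        ε * Υ 0 - f 0 ≤ ε * Υ z - f z := by
      filter_upwards [(hΥcompact (Υ 0 + 2 * Cf / ε)).compl_mem_cocompact] with z hz
      have hz' : Υ 0 + 2 * Cf / ε < Υ z := by simpa using hz
      have h1 : ε * (Υ 0 + 2 * Cf / ε) < ε * Υ z := mul_lt_mul_of_pos_left hz' hε
      have h2 : ε * (Υ 0 + 2 * Cf / ε) = ε * Υ 0 + 2 * Cf := by field_simp
      have h3 := abs_le.1 (hfb z)
      have h4 := abs_le.1 (hfb 0)
      linarith
    obtain ⟨z, hz⟩ := hcont.exists_forall_le' 0 hlarge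
    have hmin : IsLocalMin (fun z => ε * Υ z - f z) z := Filter.Eventually.of_forall hz
    have hdΥ := (hΥreg.differentiable one_ne_zero z).hasFDerivAt
    have hdf := (hf.differentiable one_ne_zero z).hasFDerivAt
    have h0 := hmin.hasFDerivAt_eq_zero ((hdΥ.const_mul ε).sub hdf)
    have hgrad : gradient f z = ε • gradient Υ z := by
      rw [gradient, gradient, ← sub_eq_zero.1 h0, map_smul]
    have hc := (hconv z).2 (Set.mem_univ (gradient Υ z)) (Set.mem_univ 0) hε.le
      (sub_nonneg.2 hε1) (by ring)
    rw [smul_zero, add_zero, hH0, smul_zero, add_zero, ← hgrad, smul_eq_mul] at hc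
    have := hcf z
    have := mul_le_mul_of_nonneg_left (hCH z) hε.le
    linarith
  by_contra! hneg
  -- this `ε` satisfies `ε * |CH| < -cf`
  have hpos : 0 < |CH| - cf := by linarith [abs_nonneg CH]
  have hε : 0 < -cf / (2 * (|CH| - cf)) := div_pos (by linarith) (by linarith)
  have hε1 : -cf / (2 * (|CH| - cf)) ≤ 1 := by
    rw [div_le_one (by linarith)]; linarith [abs_nonneg CH]
  have h1 := key _ hε hε1
  have h2 := h1.trans (mul_le_mul_of_nonneg_left (le_abs_self CH) hε.le)
  rw [div_mul_eq_mul_div, le_div_iff₀ (by linarith)] at h2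
  nlinarith [abs_nonneg CH]

/-- **Compact containment for curves satisfying the Young equality** (Corollary 5.9,
Euclidean chart): under the existence of a `C¹` good containment function `Υ`, for
bounded `C¹` `f` with `c_f = sup_z(−Hf(z)) < ∞`, every curve of length `T₀ ≤ T`
starting in the compact `K₀` and satisfying the Young equality for `f` has Lagrangian
cost at most `2 sup|f| + T c_f` and remains in a fixed compact set `K̂`. -/
theorem compact_containment_young_curves
    {d : ℕ} (H : EuclideanSpace ℝ (Fin d) → EuclideanSpace ℝ (Fin d) → ℝ)
    (hHc : Continuous fun p : EuclideanSpace ℝ (Fin d) × EuclideanSpace ℝ (Fin d) => H p.1 p.2)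
    (hconv : ∀ x, ConvexOn ℝ Set.univ (H x))
    (hH0 : ∀ x, H x 0 = 0)
    (Υ : EuclideanSpace ℝ (Fin d) → ℝ)
    (hΥreg : ContDiff ℝ 1 Υ) (hΥnn : ∀ x, 0 ≤ Υ x)
    (hΥcompact : ∀ c : ℝ, IsCompact {x | Υ x ≤ c})
    (CH : ℝ) (hCH : ∀ z, H z (gradient Υ z) ≤ CH)
    (f : EuclideanSpace ℝ (Fin d) → ℝ)
    (hf : ContDiff ℝ 1 f) (hfb : ∃ Cf : ℝ, ∀ z, |f z| ≤ Cf)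
    (cf : ℝ) (hcf : ∀ z, - H z (gradient f z) ≤ cf)
    (K₀ : Set (EuclideanSpace ℝ (Fin d))) (hK₀ : IsCompact K₀)
    (T : ℝ) (hT : 0 < T) :
    ∃ Khat : Set (EuclideanSpace ℝ (Fin d)), IsCompact Khat ∧
      ∀ T₀ : ℝ, 0 < T₀ → T₀ ≤ T →
      ∀ (x x' : ℝ → EuclideanSpace ℝ (Fin d)) (ℓ : ℝ → ℝ),
        x 0 ∈ K₀ →
        (∀ t, 0 ≤ t → t < T₀ → IntervalIntegrable x' volume 0 t ∧
          IntervalIntegrable ℓ volume 0 t ∧ x t = x 0 + ∫ s in (0:ℝ)..t, x' s) →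
        (∀ s, 0 ≤ s → s < T₀ → (ℓ s : EReal) = Lagrangian H (x s) (x' s)) →
        (∀ t, 0 ≤ t → t < T₀ →
          (∫ s in (0:ℝ)..t, H (x s) (gradient f (x s))) + (∫ s in (0:ℝ)..t, ℓ s)
            = ∫ s in (0:ℝ)..t, ⟪gradient f (x s), x' s⟫) →
        ∀ t, 0 ≤ t → t < T₀ →
          (∫ s in (0:ℝ)..t, ℓ s) ≤ 2 * (⨆ z, |f z|) + T * cf ∧ x t ∈ Khat := by
  obtain ⟨Cf, hCf⟩ := hfb
  have hcf0 : 0 ≤ cf := young_const_nonneg hconv hH0 hΥreg hΥcompact hCH hf hCf hcf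
  obtain ⟨M, hM⟩ := hK₀.bddAbove_image hΥreg.continuous.continuousOn
  refine ⟨{z | Υ z ≤ M + T * |CH| + (2 * (⨆ z, |f z|) + T * cf)}, hΥcompact _, ?_⟩
  intro T₀ _ hT₀T x x' ℓ hx0 hAC hℓ hYoung t ht htT₀
  obtain ⟨hx'int, hℓint, -⟩ := hAC t ht htT₀
  have hxeq : ∀ s ∈ Set.Icc 0 t, x s = x 0 + ∫ r in (0:ℝ)..s, x' r :=
    fun s hs => (hAC s hs.1 (hs.2.trans_lt htT₀)).2.2
  have htT : t ≤ T := htT₀.le.trans hT₀T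
  obtain ⟨hxcont, -, hfint⟩ := young_chain_rule hf ht hx'int hxeq
  obtain ⟨-, hΥint', hΥint⟩ := young_chain_rule hΥreg ht hx'int hxeq
  have hgradcont : Continuous (gradient f) :=
    (InnerProductSpace.toDual ℝ _).symm.continuous.comp (hf.continuous_fderiv one_ne_zero)
  have hHint : IntervalIntegrable (fun s => H (x s) (gradient f (x s))) volume 0 t := by
    apply ContinuousOn.intervalIntegrable
    rw [Set.uIcc_of_le ht]
    exact hHc.comp_continuousOn (hxcont.prodMk (hgradcont.comp_continuousOn hxcont))
  have hHlow : -(t * cf) ≤ ∫ s in (0:ℝ)..t, H (x s) (gradient f (x s)) := by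
    have := intervalIntegral.integral_mono_on ht
      (intervalIntegrable_const (c := -cf)) hHint
      (fun s _ => by linarith [hcf (x s)])
    simpa using this
  have hsup : ∀ z, |f z| ≤ ⨆ z, |f z| :=
    le_ciSup (f := fun z => |f z|) ⟨Cf, by rintro _ ⟨z, rfl⟩; exact hCf z⟩
  have hcost : (∫ s in (0:ℝ)..t, ℓ s) ≤ 2 * (⨆ z, |f z|) + T * cf := by
    have h1 := hYoung t ht htT₀
    have h2 := abs_le.1 (hsup (x t))
    have h3 := abs_le.1 (hsup (x 0))
    have h4 : t * cf ≤ T * cf := mul_le_mul_of_nonneg_right htT hcf0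
    linarith
  refine ⟨hcost, ?_⟩
  -- the Fenchel inequality at `p = ∇Υ(x(s))`
  have hfenchel : ∀ s ∈ Set.Icc 0 t, ⟪gradient Υ (x s), x' s⟫ ≤ |CH| + ℓ s := by
    intro s hs
    have h1 : ((⟪gradient Υ (x s), x' s⟫ - H (x s) (gradient Υ (x s)) : ℝ) : EReal) ≤ ℓ s := by
      rw [hℓ s hs.1 (hs.2.trans_lt htT₀)]
      exact le_iSup (fun p : EuclideanSpace ℝ (Fin d) =>
        ((⟪p, x' s⟫ - H (x s) p : ℝ) : EReal)) (gradient Υ (x s))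
    have h2 := EReal.coe_le_coe_iff.1 h1
    linarith [hCH (x s), le_abs_self CH]
  have hbound := intervalIntegral.integral_mono_on ht hΥint'
    ((intervalIntegrable_const (c := |CH|)).add hℓint) hfenchel
  rw [hΥint, intervalIntegral.integral_add intervalIntegrable_const hℓint,
    intervalIntegral.integral_const, sub_zero, smul_eq_mul] at hbound
  have hM0 : Υ (x 0) ≤ M := hM (Set.mem_image_of_mem Υ hx0)
  have htCH : t * |CH| ≤ T * |CH| := mul_le_mul_of_nonneg_right htT (abs_nonneg CH)
  change Υ (x t) ≤ _
  linarith
end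

section
/- Let S = {1,…,N} be a finite set, b : ℝ^d × S → ℝ^d continuous, and for every x ∈ ℝ^d let (q_{ij}(x)) be a conservative rate matrix on S with each q_{ij} continuous. For n ≥ 1 define, for u : ℝ^d × S → ℝ twice continuously differentiable in x, H_n u(x,i) = ⟨b(x,i), ∇_x u(x,i)⟩ + (1/2)|∇_x u(x,i)|² + (1/(2n)) Δ_x u(x,i) + Σ_{j ∈ S} q_{ij}(x) ( e^{n(u(x,j) − u(x,i))} − 1 ). Let f ∈ C²_c(ℝ^d), let φ : ℝ^d × S → ℝ be C² in x with compact support, and set f_n(x,i) = f(x) + φ(x,i)/n. Then H_n f_n converges uniformly on ℝ^d × S, as n → ∞, to H_{f,φ}(x,i) = ⟨b(x,i), ∇f(x)⟩ + (1/2)|∇f(x)|² + Σ_{j ∈ S} q_{ij}(x) ( e^{φ(x,j) − φ(x,i)} − 1 ). -/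
/-!
Put `c = 1/n`, so that `f_n = f + c φ`. The exponent `n (f_n(x,j) - f_n(x,i))` equals
`φ(x,j) - φ(x,i)`, hence the jump terms of `H_n f_n` and of the limit coincide. Expanding the
remaining terms by linearity of `∇` and `Δ` gives the exact identity
`H_n f_n - H_{f,φ} = c (⟨b,∇φ⟩ + ⟨∇f,∇φ⟩ + Δf/2) + c² (|∇φ|² + Δφ)/2`.
For each of the finitely many `i`, both brackets are continuous with compact support in `x`, hence
bounded (`exists_bound_remainder`), and the difference is at most `C/n` uniformly.
-/

open scoped RealInnerProductSpace
open Filter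

/-- The Laplacian on `ℝ^d`, as the sum of the pure second derivatives along the standard basis. -/
noncomputable def coordLaplacian {d : ℕ} (g : EuclideanSpace ℝ (Fin d) → ℝ)
    (x : EuclideanSpace ℝ (Fin d)) : ℝ :=
  ∑ k : Fin d, fderiv ℝ (fderiv ℝ g) x (EuclideanSpace.single k 1) (EuclideanSpace.single k 1)

section Calculus

variable {d : ℕ} {f g : EuclideanSpace ℝ (Fin d) → ℝ}

lemma continuous_gradient (hg : ContDiff ℝ 2 g) : Continuous (gradient g) :=
  (InnerProductSpace.toDual ℝ (EuclideanSpace ℝ (Fin d))).symm.continuous.comp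
    (hg.continuous_fderiv (by norm_num))

lemma hasCompactSupport_gradient (hg : HasCompactSupport g) : HasCompactSupport (gradient g) :=
  (hg.fderiv ℝ).comp_left (map_zero (InnerProductSpace.toDual ℝ (EuclideanSpace ℝ (Fin d))).symm)

lemma continuous_coordLaplacian (hg : ContDiff ℝ 2 g) : Continuous (coordLaplacian g) := by
  have h : Continuous (fderiv ℝ (fderiv ℝ g)) :=
    (hg.fderiv_right (m := 1) (by norm_num)).continuous_fderiv (by norm_num)
  unfold coordLaplacian
  fun_prop

lemma hasCompactSupport_coordLaplacian (hg : HasCompactSupport g) :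
    HasCompactSupport (coordLaplacian g) :=
  ((hg.fderiv ℝ).fderiv ℝ).comp_left
    (g := fun T : EuclideanSpace ℝ (Fin d) →L[ℝ] EuclideanSpace ℝ (Fin d) →L[ℝ] ℝ =>
      ∑ k : Fin d, T (EuclideanSpace.single k 1) (EuclideanSpace.single k 1)) (by simp)

lemma fderiv_add_div (hf : ContDiff ℝ 2 f) (hg : ContDiff ℝ 2 g) (r : ℝ) :
    fderiv ℝ (fun y => f y + g y / r) = fun x => fderiv ℝ f x + r⁻¹ • fderiv ℝ g x := by
  funext x
  have hf' : DifferentiableAt ℝ f x := hf.differentiable (by norm_num) x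
  have hg' : DifferentiableAt ℝ g x := hg.differentiable (by norm_num) x
  have h := (hf'.hasFDerivAt.add (hg'.hasFDerivAt.const_smul r⁻¹)).fderiv
  rw [← h]
  congr 1
  funext y
  simp [div_eq_inv_mul]

lemma gradient_add_div (hf : ContDiff ℝ 2 f) (hg : ContDiff ℝ 2 g) (r : ℝ)
    (x : EuclideanSpace ℝ (Fin d)) :
    gradient (fun y => f y + g y / r) x = gradient f x + r⁻¹ • gradient g x := by
  simp [gradient, fderiv_add_div hf hg r]

lemma coordLaplacian_add_div (hf : ContDiff ℝ 2 f) (hg : ContDiff ℝ 2 g) (r : ℝ)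
    (x : EuclideanSpace ℝ (Fin d)) :
    coordLaplacian (fun y => f y + g y / r) x
      = coordLaplacian f x + r⁻¹ * coordLaplacian g x := by
  have hf' : DifferentiableAt ℝ (fderiv ℝ f) x :=
    (hf.fderiv_right (m := 1) (by norm_num)).differentiable (by norm_num) x
  have hg' : DifferentiableAt ℝ (fderiv ℝ g) x :=
    (hg.fderiv_right (m := 1) (by norm_num)).differentiable (by norm_num) x
  have h : fderiv ℝ (fun x => fderiv ℝ f x + r⁻¹ • fderiv ℝ g x) x
      = fderiv ℝ (fderiv ℝ f) x + r⁻¹ • fderiv ℝ (fderiv ℝ g) x :=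
    (hf'.hasFDerivAt.add (hg'.hasFDerivAt.const_smul r⁻¹)).fderiv
  simp [coordLaplacian, fderiv_add_div hf hg r, h, Finset.sum_add_distrib, Finset.mul_sum]

/-- The coefficients of `1/n` and of `1/n²` in `H_n f_n - H_{f,φ}` are bounded, being continuous
with compact support. -/
lemma exists_bound_remainder {β : EuclideanSpace ℝ (Fin d) → EuclideanSpace ℝ (Fin d)}
    (hβ : Continuous β) (hf : ContDiff ℝ 2 f) (hfs : HasCompactSupport f)
    (hg : ContDiff ℝ 2 g) (hgs : HasCompactSupport g) :
    ∃ C : ℝ, ∀ x,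
      |⟪β x, gradient g x⟫ + ⟪gradient f x, gradient g x⟫ + coordLaplacian f x / 2|
        + |(‖gradient g x‖ ^ 2 + coordLaplacian g x) / 2| ≤ C := by
  have cf := continuous_gradient hf
  have cg := continuous_gradient hg
  have lf := continuous_coordLaplacian hf
  have lg := continuous_coordLaplacian hg
  have hcont : Continuous fun x =>
      |⟪β x, gradient g x⟫ + ⟪gradient f x, gradient g x⟫ + coordLaplacian f x / 2|
        + |(‖gradient g x‖ ^ 2 + coordLaplacian g x) / 2| := by fun_prop
  -- Everything vanishes where `∇g`, `Δf` and `Δg` all do.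
  have hK : IsCompact (tsupport (gradient g) ∪
      (tsupport (coordLaplacian f) ∪ tsupport (coordLaplacian g))) :=
    (hasCompactSupport_gradient hgs).isCompact.union
      ((hasCompactSupport_coordLaplacian hfs).isCompact.union
        (hasCompactSupport_coordLaplacian hgs).isCompact)
  have hsupp := HasCompactSupport.intro hK (f := fun x =>
      |⟪β x, gradient g x⟫ + ⟪gradient f x, gradient g x⟫ + coordLaplacian f x / 2|
        + |(‖gradient g x‖ ^ 2 + coordLaplacian g x) / 2|) (by
    intro x hx
    simp only [Set.mem_union, not_or] at hx
    simp [image_eq_zero_of_notMem_tsupport hx.1, image_eq_zero_of_notMem_tsupport hx.2.1,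
      image_eq_zero_of_notMem_tsupport hx.2.2])
  obtain ⟨C, hC⟩ := hsupp.exists_bound_of_continuous hcont
  exact ⟨C, fun x => (le_abs_self _).trans (hC x)⟩

end Calculus

/-- **Convergence of the nonlinear generators** (Proposition 5.1, Euclidean chart):
for `f ∈ C²_c` and `φ(·,i) ∈ C²_c`, setting `f_n(x,i) = f(x) + φ(x,i)/n`, the nonlinear
generators
`H_n u(x,i) = ⟨b(x,i), ∇_x u⟩ + ½|∇_x u|² + (1/2n) Δ_x u + Σ_j q_{ij}(x)(e^{n(u(x,j)−u(x,i))} − 1)`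
applied to `f_n` converge uniformly on `ℝ^d × S` to
`H_{f,φ}(x,i) = ⟨b(x,i), ∇f(x)⟩ + ½|∇f(x)|² + Σ_j q_{ij}(x)(e^{φ(x,j)−φ(x,i)} − 1)`.
The Laplacian is written as the sum of the second derivatives in the coordinate
directions `EuclideanSpace.single k 1`. -/
theorem nonlinear_generator_convergence
    {d N : ℕ} (hN : 0 < N)
    (b : EuclideanSpace ℝ (Fin d) → Fin N → EuclideanSpace ℝ (Fin d))
    (hb : ∀ i, Continuous fun x => b x i)
    (q : EuclideanSpace ℝ (Fin d) → Fin N → Fin N → ℝ)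
    (hq : ∀ i j, Continuous fun x => q x i j)
    (hoff : ∀ x, ∀ i j, i ≠ j → 0 ≤ q x i j)
    (hcons : ∀ x, ∀ i, ∑ j, q x i j = 0)
    (f : EuclideanSpace ℝ (Fin d) → ℝ)
    (hf : ContDiff ℝ 2 f) (hfsupp : HasCompactSupport f)
    (φ : EuclideanSpace ℝ (Fin d) → Fin N → ℝ)
    (hφ : ∀ i, ContDiff ℝ 2 fun x => φ x i)
    (hφsupp : ∀ i, HasCompactSupport fun x => φ x i) :
    TendstoUniformly
      (fun (n : ℕ) (p : EuclideanSpace ℝ (Fin d) × Fin N) =>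
        ⟪b p.1 p.2, gradient (fun y => f y + φ y p.2 / (n : ℝ)) p.1⟫
        + (1/2) * ‖gradient (fun y => f y + φ y p.2 / (n : ℝ)) p.1‖^2
        + (1/(2*(n : ℝ))) * (∑ k : Fin d,
            fderiv ℝ (fderiv ℝ fun y => f y + φ y p.2 / (n : ℝ)) p.1
              (EuclideanSpace.single k 1) (EuclideanSpace.single k 1))
        + ∑ j, q p.1 p.2 j *
            (Real.exp ((n : ℝ) * ((f p.1 + φ p.1 j / (n : ℝ)) - (f p.1 + φ p.1 p.2 / (n : ℝ)))) - 1))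
      (fun p : EuclideanSpace ℝ (Fin d) × Fin N =>
        ⟪b p.1 p.2, gradient f p.1⟫ + (1/2) * ‖gradient f p.1‖^2
        + ∑ j, q p.1 p.2 j * (Real.exp (φ p.1 j - φ p.1 p.2) - 1))
      atTop := by
  choose C hC using fun i => exists_bound_remainder (hb i) hf hfsupp (hφ i) (hφsupp i)
  have hC0 : ∀ i, 0 ≤ C i := fun i => le_trans (by positivity) (hC i 0)
  have hlim : Tendsto (fun n : ℕ => (n : ℝ)⁻¹ * ∑ i, C i) atTop (nhds 0) := by
    simpa using (tendsto_inv_atTop_nhds_zero_nat (𝕜 := ℝ)).mul_const (∑ i, C i)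
  rw [Metric.tendstoUniformly_iff]
  intro ε hε
  filter_upwards [hlim.eventually_lt_const hε, eventually_ge_atTop 1] with n hn hn1
  rintro ⟨x, i⟩
  have hn0 : (0 : ℝ) < n := by exact_mod_cast hn1
  have hc1 : (n : ℝ)⁻¹ ≤ 1 := inv_le_one_of_one_le₀ (by exact_mod_cast hn1)
  have hc0 : 0 < (n : ℝ)⁻¹ := inv_pos.mpr hn0
  refine lt_of_le_of_lt ?_ hn
  have hexp : ∀ j, (n : ℝ) * ((f x + φ x j / (n : ℝ)) - (f x + φ x i / (n : ℝ)))
      = φ x j - φ x i := by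
    intro j
    field_simp
    ring
  have hL := coordLaplacian_add_div hf (hφ i) n x
  rw [coordLaplacian] at hL
  dsimp only
  simp only [hexp]
  rw [hL, gradient_add_div hf (hφ i), dist_comm, Real.dist_eq]
  have key : ⟪b x i, gradient f x + (n : ℝ)⁻¹ • gradient (fun y => φ y i) x⟫
        + 1 / 2 * ‖gradient f x + (n : ℝ)⁻¹ • gradient (fun y => φ y i) x‖ ^ 2
        + 1 / (2 * (n : ℝ)) * (coordLaplacian f x
          + (n : ℝ)⁻¹ * coordLaplacian (fun y => φ y i) x)
        + ∑ j, q x i j * (Real.exp (φ x j - φ x i) - 1)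
      - (⟪b x i, gradient f x⟫ + 1 / 2 * ‖gradient f x‖ ^ 2
        + ∑ j, q x i j * (Real.exp (φ x j - φ x i) - 1))
      = (n : ℝ)⁻¹ * ((⟪b x i, gradient (fun y => φ y i) x⟫
            + ⟪gradient f x, gradient (fun y => φ y i) x⟫ + coordLaplacian f x / 2)
          + (n : ℝ)⁻¹ * ((‖gradient (fun y => φ y i) x‖ ^ 2
            + coordLaplacian (fun y => φ y i) x) / 2)) := by
    rw [norm_add_sq_real, inner_add_right, inner_smul_right, inner_smul_right, norm_smul,
      Real.norm_of_nonneg hc0.le]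
    field_simp
    ring
  rw [key, abs_mul, abs_of_pos hc0]
  gcongr
  refine (abs_add_le _ _).trans (le_trans ?_ ((hC i x).trans
    (Finset.single_le_sum (fun j _ => hC0 j) (Finset.mem_univ i))))
  rw [abs_mul, abs_of_pos hc0]
  gcongr
  exact mul_le_of_le_one_left (abs_nonneg _) hc1
end
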